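/- For every integer n ≥ 1, over PA⁻ + IΣn the following four statements are pairwise equivalent: GPHP(Σ_{n+1}), FRT^1(Σ_{n+1}), fairFRT^1(Σ_{n+1}), and FRT^1_2(Σ_{n+1}). -/

import Mathlib

/- Shared development: first-order arithmetic in the language {0,1,+,·,<},
   the arithmetic hierarchy, fragments of arithmetic, and coded finite
   combinatorics inside models. -/

open FirstOrder Language

namespace ArithFC

/-- Function symbols of the language of arithmetic: 0, 1, +, ·. -/
inductive Func : ℕ → Type
  | zero : Func 0
  | one : Func 0
  | add : Func 2
  | mul : Func 2

/-- Relation symbols of the language of arithmetic: <. -/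
inductive Rel : ℕ → Type
  | lt : Rel 2

/-- The first-order language {0, 1, +, ·, <}. -/
def lang : Language :=
  { Functions := Func, Relations := Rel }

section Instances

variable (M : Type) [lang.Structure M]

instance : Zero M := ⟨Structure.funMap (L := lang) Func.zero ![]⟩
instance : One M := ⟨Structure.funMap (L := lang) Func.one ![]⟩
instance : Add M := ⟨fun x y => Structure.funMap (L := lang) Func.add ![x, y]⟩
instance : Mul M := ⟨fun x y => Structure.funMap (L := lang) Func.mul ![x, y]⟩
instance : LT M := ⟨fun x y => Structure.RelMap (L := lang) Rel.lt ![x, y]⟩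
instance : LE M := ⟨fun x y => x < y ∨ x = y⟩

end Instances

/-- The numeral `n` in a model. -/
def numM (M : Type) [lang.Structure M] : ℕ → M
  | 0 => 0
  | n + 1 => numM M n + 1

/-- `b` is nonstandard (greater than every numeral). -/
def Nonstd {M : Type} [lang.Structure M] (b : M) : Prop := ∀ n : ℕ, numM M n < b

/-- The atomic formula `t < u`. -/
def ltFm {α : Type} {n : ℕ} (t u : lang.Term (α ⊕ Fin n)) : lang.BoundedFormula α n :=
  BoundedFormula.rel (Rel.lt : lang.Relations 2) ![t, u]

/-- Δ₀ formulas: built from atomic formulas by boolean connectives and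
bounded universal quantification (this generates, up to logical equivalence,
the usual class of bounded formulas). -/
inductive IsDelta0 {α : Type} : ∀ n : ℕ, lang.BoundedFormula α n → Prop
  | falsum (n : ℕ) : IsDelta0 n BoundedFormula.falsum
  | equal (n : ℕ) (t u : lang.Term (α ⊕ Fin n)) : IsDelta0 n (BoundedFormula.equal t u)
  | rel (n l : ℕ) (R : lang.Relations l) (ts : Fin l → lang.Term (α ⊕ Fin n)) :
      IsDelta0 n (BoundedFormula.rel R ts)
  | imp (n : ℕ) {φ ψ : lang.BoundedFormula α n} :
      IsDelta0 n φ → IsDelta0 n ψ → IsDelta0 n (φ.imp ψ)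
  | bdAll (n : ℕ) (t : lang.Term (α ⊕ Fin n)) {φ : lang.BoundedFormula α (n + 1)} :
      IsDelta0 (n + 1) φ →
      IsDelta0 n
        (BoundedFormula.all ((ltFm (Term.var (Sum.inr (Fin.last n))) (t.liftAt 1 n)).imp φ))

mutual
  /-- Σ_m formulas. -/
  inductive SigmaFm {α : Type} : ℕ → ∀ n : ℕ, lang.BoundedFormula α n → Prop
    | delta0 (m n : ℕ) {φ : lang.BoundedFormula α n} : IsDelta0 n φ → SigmaFm m n φ
    | ofPi (m n : ℕ) {φ : lang.BoundedFormula α n} : PiFm m n φ → SigmaFm (m + 1) n φ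
    | ex (m n : ℕ) {φ : lang.BoundedFormula α (n + 1)} :
        SigmaFm (m + 1) (n + 1) φ → SigmaFm (m + 1) n φ.ex
  /-- Π_m formulas. -/
  inductive PiFm {α : Type} : ℕ → ∀ n : ℕ, lang.BoundedFormula α n → Prop
    | delta0 (m n : ℕ) {φ : lang.BoundedFormula α n} : IsDelta0 n φ → PiFm m n φ
    | ofSigma (m n : ℕ) {φ : lang.BoundedFormula α n} : SigmaFm m n φ → PiFm (m + 1) n φ
    | all (m n : ℕ) {φ : lang.BoundedFormula α (n + 1)} :
        PiFm (m + 1) (n + 1) φ → PiFm (m + 1) n φ.all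
end

/-- A `k`-ary relation on `M` is Σ_m-definable (with parameters from `M`). -/
def IsSigmaDef (m : ℕ) (M : Type) [lang.Structure M] {k : ℕ} (R : (Fin k → M) → Prop) : Prop :=
  ∃ (p : ℕ) (φ : lang.BoundedFormula (Fin k ⊕ Fin p) 0) (w : Fin p → M),
    SigmaFm m 0 φ ∧ ∀ v : Fin k → M, R v ↔ φ.Realize (Sum.elim v w) finZeroElim

/-- A subset of `M` is Σ_m-definable with parameters. -/
def SigmaDef1 (m : ℕ) (M : Type) [lang.Structure M] (A : Set M) : Prop :=
  IsSigmaDef m M (k := 1) fun v => v 0 ∈ A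

/-- A binary relation on `M` is Σ_m-definable with parameters. -/
def SigmaDef2 (m : ℕ) (M : Type) [lang.Structure M] (R : M → M → Prop) : Prop :=
  IsSigmaDef m M (k := 2) fun v => R (v 0) (v 1)

/-- A ternary relation on `M` is Σ_m-definable with parameters. -/
def SigmaDef3 (m : ℕ) (M : Type) [lang.Structure M] (R : M → M → M → Prop) : Prop :=
  IsSigmaDef m M (k := 3) fun v => R (v 0) (v 1) (v 2)

/-- `M` is a model of PA⁻ (the nonnegative part of a discretely ordered
commutative semiring). -/
structure PAm (M : Type) [lang.Structure M] : Prop where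
  add_assoc : ∀ x y z : M, x + y + z = x + (y + z)
  add_comm : ∀ x y : M, x + y = y + x
  mul_assoc : ∀ x y z : M, x * y * z = x * (y * z)
  mul_comm : ∀ x y : M, x * y = y * x
  ldistrib : ∀ x y z : M, x * (y + z) = x * y + x * z
  add_zero : ∀ x : M, x + 0 = x
  mul_zero : ∀ x : M, x * 0 = 0
  mul_one : ∀ x : M, x * 1 = x
  lt_trans : ∀ x y z : M, x < y → y < z → x < z
  lt_irrefl : ∀ x : M, ¬x < x
  lt_total : ∀ x y : M, x < y ∨ x = y ∨ y < x
  add_lt_add : ∀ x y z : M, x < y → x + z < y + z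
  mul_lt_mul : ∀ x y z : M, x < y → 0 < z → x * z < y * z
  sub_exists : ∀ x y : M, x < y → ∃ z, x + z = y
  zero_lt_one : (0 : M) < 1
  discrete : ∀ x : M, 0 < x → (1 : M) ≤ x
  zero_le : ∀ x : M, (0 : M) ≤ x

/-- `M` satisfies the Σ_m-induction scheme (with parameters). -/
def ISig (m : ℕ) (M : Type) [lang.Structure M] : Prop :=
  ∀ A : Set M, SigmaDef1 m M A → (0 : M) ∈ A → (∀ x, x ∈ A → x + 1 ∈ A) → ∀ x, x ∈ A

/-- `M` satisfies the Σ_m-collection (bounding) scheme (with parameters). -/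
def BSig (m : ℕ) (M : Type) [lang.Structure M] : Prop :=
  ∀ R : M → M → Prop, SigmaDef2 m M R → ∀ a : M,
    (∀ x, x < a → ∃ y, R x y) → ∃ b, ∀ x, x < a → ∃ y, y < b ∧ R x y

section Coding

variable {M : Type} [lang.Structure M]

/-- `z` is the Cantor pair `⟨x, y⟩`: `2z = (x+y)(x+y+1) + 2y`. -/
def IsPairC (z x y : M) : Prop := z + z = (x + y) * (x + y + 1) + (y + y)

/-- Gödel's β-function: `x = a mod ((i+1)·b + 1)`. -/
def BetaC (a b i x : M) : Prop :=
  x < (i + 1) * b + 1 ∧ ∃ q, a = q * ((i + 1) * b + 1) + x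

/-- The sequence coded by `s` (via a Cantor pair of β-function data) has value `x`
at place `i`. -/
def SeqAt (s i x : M) : Prop := ∃ a b, IsPairC s a b ∧ BetaC a b i x

/-- `c` codes the M-finite set `X` of cardinality `card`: `c = ⟨card, s⟩` where `s`
codes the strictly increasing enumeration of `X` of length `card`. -/
def CodesFinset (c : M) (X : Set M) (card : M) : Prop :=
  ∃ s, IsPairC c card s ∧
    (∀ i, i < card → ∃ x, x ∈ X ∧ SeqAt s i x) ∧
    (∀ i j x y, i < j → j < card → SeqAt s i x → SeqAt s j y → x < y) ∧
    (∀ x, x ∈ X ↔ ∃ i, i < card ∧ SeqAt s i x)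

/-- `X` is an M-finite (coded) set. -/
def MFinite (X : Set M) : Prop := ∃ c card : M, CodesFinset c X card

/-- `d` codes an `e`-element subset `D` of `[0, y)`, i.e. an element of `[y]^e`. -/
def CodesTupleIn (d e y : M) (D : Set M) : Prop :=
  CodesFinset d D e ∧ ∀ z ∈ D, z < y

/-- `f` codes a (finite) function defined on all of `[0, a)`. -/
def CodesFunOn (f a : M) : Prop :=
  ∀ x, x < a → (∃ y, SeqAt f x y) ∧ ∀ y y', SeqAt f x y → SeqAt f x y' → y = y'

/-- `X` is an M-coded subset of `[0, a)`. -/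
def MCodedSubset (a : M) (X : Set M) : Prop :=
  MFinite X ∧ ∀ x ∈ X, x < a

end Coding

/-- An `M`-ultrafilter on `a`: an ultrafilter of the Boolean algebra of
M-finite subsets of `[0, a)`. -/
structure MUltra (M : Type) [lang.Structure M] (a : M) where
  sets : Set (Set M)
  mem_coded : ∀ X ∈ sets, MCodedSubset a X
  univ_mem : {x : M | x < a} ∈ sets
  superset_mem : ∀ X Y : Set M, X ∈ sets → MCodedSubset a Y → X ⊆ Y → Y ∈ sets
  inter_mem : ∀ X Y : Set M, X ∈ sets → Y ∈ sets → X ∩ Y ∈ sets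
  empty_not_mem : (∅ : Set M) ∉ sets
  ultra : ∀ X : Set M, MCodedSubset a X → X ∈ sets ∨ {x : M | x < a ∧ x ∉ X} ∈ sets

section Principles

variable (M : Type) [lang.Structure M]

/-- `F` is (the graph of) a Σ_m-definable injection from `[0, y)` into `[0, x)`. -/
def SigmaInjRel (m : ℕ) (F : M → M → Prop) (y x : M) : Prop :=
  SigmaDef2 m M F ∧
    (∀ u, u < y → ∃ v, v < x ∧ F u v) ∧
    (∀ u v v', u < y → F u v → F u v' → v = v') ∧
    (∀ u u' v, u < y → u' < y → F u v → F u' v → u = u')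

/-- There exists a Σ_m-definable injection from `[0, y)` into `[0, x)`. -/
def ExSigmaInj (m : ℕ) (y x : M) : Prop := ∃ F : M → M → Prop, SigmaInjRel M m F y x

/-- There exists a Σ_m-definable injection from all of `M` into `[0, a)`. -/
def SigmaInjWhole (m : ℕ) (a : M) : Prop :=
  ∃ F : M → M → Prop, SigmaDef2 m M F ∧
    (∀ u, ∃ v, v < a ∧ F u v) ∧
    (∀ u v v', F u v → F u v' → v = v') ∧
    (∀ u u' v, F u v → F u' v → u = u')

/-- CARD(Σ_m): no Σ_m-definable multivalued map sends `M` injectively below `a`. -/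
def CARD (m : ℕ) : Prop :=
  ∀ F : M → M → Prop, SigmaDef2 m M F → ∀ a : M,
    (∀ x, ∃ y, y < a ∧ F x y) →
      ∃ x0 x1 y, x0 ≠ x1 ∧ y < a ∧ F x0 y ∧ F x1 y

/-- GPHP(Σ_m): for every `x` there is `y` with no Σ_m-definable injection of
`[0,y)` into `[0,x)`. -/
def GPHP (m : ℕ) : Prop := ∀ x : M, ∃ y : M, ¬ExSigmaInj M m y x

/-- WPHP(Σ_m): for `x > 0` there is no Σ_m-definable injection of `[0,2x)` into `[0,x)`. -/
def WPHP (m : ℕ) : Prop := ∀ x : M, 0 < x → ¬ExSigmaInj M m (x + x) x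

/-- `C` is a Σ_m-definable `k`-coloring of `[y]^e` (acting on codes of
`e`-element subsets of `[0,y)`, independently of the chosen code). -/
def IsColoring (m : ℕ) (e y k : M) (C : M → M → Prop) : Prop :=
  SigmaDef2 m M C ∧
    (∀ d D, CodesTupleIn d e y D → ∃ i, i < k ∧ C d i) ∧
    (∀ d d' D i i', CodesTupleIn d e y D → CodesTupleIn d' e y D → C d i → C d' i' → i = i')

/-- FRT^e_k(Σ_m): every Σ_m-definable `k`-coloring of some `[y]^e` has an
M-finite homogeneous set of cardinality `x`, for every `x`. -/
def FRT (m : ℕ) (e k : M) : Prop :=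
  ∀ x : M, ∃ y : M, ∀ C : M → M → Prop, IsColoring M m e y k C →
    ∃ (c : M) (H : Set M), CodesFinset c H x ∧ (∀ z ∈ H, z < y) ∧
      ∃ i, ∀ d D, CodesFinset d D e → D ⊆ H → C d i

/-- fairFRT^e_k(Σ_m): the homogeneous set is required to be given as the range of a
Σ_m-definable injection from `[0,x)` into `[0,y)`. -/
def FairFRT (m : ℕ) (e k : M) : Prop :=
  ∀ x : M, ∃ y : M, ∀ C : M → M → Prop, IsColoring M m e y k C →
    ∃ H : M → M → Prop, SigmaInjRel M m H x y ∧
      ∃ i, ∀ d D, CodesFinset d D e → (∀ z ∈ D, ∃ u, u < x ∧ H u z) → C d i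

/-- `C` is a Σ_m-definable `k`-coloring of `[0, y)`. -/
def IsColoring1 (m : ℕ) (y k : M) (C : M → M → Prop) : Prop :=
  SigmaDef2 m M C ∧
    (∀ z, z < y → ∃ i, i < k ∧ C z i) ∧
    (∀ z i i', z < y → C z i → C z i' → i = i')

/-- FRT¹_k(Σ_m): every Σ_m-definable `k`-coloring of some `[0,y)` has an M-finite
homogeneous set of cardinality `x`, for every `x`. -/
def FRT1 (m : ℕ) (k : M) : Prop :=
  ∀ x : M, ∃ y : M, ∀ C : M → M → Prop, IsColoring1 M m y k C →
    ∃ (c : M) (H : Set M), CodesFinset c H x ∧ (∀ z ∈ H, z < y) ∧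
      ∃ i, ∀ z ∈ H, C z i

/-- fairFRT¹_k(Σ_m). -/
def FairFRT1 (m : ℕ) (k : M) : Prop :=
  ∀ x : M, ∃ y : M, ∀ C : M → M → Prop, IsColoring1 M m y k C →
    ∃ H : M → M → Prop, SigmaInjRel M m H x y ∧
      ∃ i, ∀ u v, u < x → H u v → C v i

end Principles

section Approx

variable {M : Type} [lang.Structure M]

/-- `f` is (the graph of) a partial function. -/
def IsPartialFun (f : M → M → Prop) : Prop := ∀ x y y', f x y → f x y' → y = y'

/-- `s` codes an approximation to the partial function `f` of length `b`. -/
def IsApprox (f : M → M → Prop) (s b : M) : Prop :=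
  (∀ i, i < b → ∃ v, SeqAt s i v) ∧
    (∀ i u v x y, i + 1 < b → SeqAt s i u → SeqAt s (i + 1) v → x ≤ u → f x y → y ≤ v)

/-- `s` codes a `g`-stretched approximation to the partial function `f` of length `b`. -/
def IsStretchedApprox (f g : M → M → Prop) (s b : M) : Prop :=
  (∀ i, i < b → ∃ v, SeqAt s i v) ∧
    (∀ i u w v x y, i + 1 < b → SeqAt s i u → g u w → SeqAt s (i + 1) v →
      x ≤ w → f x y → y ≤ v)

/-- The eventual (limit) value of `fun s => h s ·` is `x`. -/
def EvLim (h : M → M → Prop) (x : M) : Prop := ∃ s : M, ∀ t, s < t → h t x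

end Approx

/-- PΣ_m: every partial Σ_m-definable function admits approximations of every length. -/
def PSig (m : ℕ) (M : Type) [lang.Structure M] : Prop :=
  ∀ f : M → M → Prop, SigmaDef2 m M f → IsPartialFun f → ∀ b : M, ∃ s, IsApprox f s b

section Extensions

variable (M N : Type) [lang.Structure M] [lang.Structure N]

/-- `g : M → N` is Σ_m-elementary: Σ_m formulas with parameters from `M` transfer. -/
def SigmaElem (m : ℕ) (g : M → N) : Prop :=
  ∀ (p : ℕ) (φ : lang.BoundedFormula (Fin p) 0), SigmaFm m 0 φ →
    ∀ v : Fin p → M, (φ.Realize v finZeroElim ↔ φ.Realize (g ∘ v) finZeroElim)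

/-- The extension `g : M → N` is cofinal. -/
def Cofinal (g : M → N) : Prop := ∀ z : N, ∃ x : M, z ≤ g x

/-- `[0,a]^M = [0,a]^N`: every element of `N` below `g a` comes from `M`. -/
def SameBelow (g : M → N) (a : M) : Prop := ∀ z : N, z ≤ g a → ∃ x : M, g x = z

end Extensions

section Ramsey

variable {M : Type} [lang.Structure M]

/-- `f` is an M-coded `k`-coloring of `[y]^e` (assigning colors to codes of
`e`-subsets of `[0,y)`, independently of the code). -/
def CodedColoring (f e y k : M) : Prop :=
  (∀ d D, CodesTupleIn d e y D → ∃ i, i < k ∧ SeqAt f d i) ∧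
    (∀ d d' D i i', CodesTupleIn d e y D → CodesTupleIn d' e y D →
      SeqAt f d i → SeqAt f d' i' → i = i')

/-- The coded coloring `f` of `[y]^e` has an M-coded homogeneous set of cardinality `x`. -/
def CodedHomog (f e y x : M) : Prop :=
  ∃ (c : M) (H : Set M), CodesFinset c H x ∧ (∀ z ∈ H, z < y) ∧
    ∃ i, ∀ d D, CodesFinset d D e → D ⊆ H → SeqAt f d i

/-- `y = r(x, e, k)`: `y` is the least size guaranteeing coded homogeneous sets of
cardinality `x` for all coded `k`-colorings of `e`-subsets. -/
def IsRamsey (x e k y : M) : Prop :=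
  (∀ f, CodedColoring f e y k → CodedHomog f e y x) ∧
    (∀ y', y' < y → ∃ f, CodedColoring f e y' k ∧ ¬CodedHomog f e y' x)

/-- `y = r^(b)(x, e, k)`: the `b`-th iterate of the Ramsey function inside `M`. -/
def IterRamsey (x e k b y : M) : Prop :=
  ∃ s : M, SeqAt s 0 x ∧ SeqAt s b y ∧ (∀ i, i ≤ b → ∃ u, SeqAt s i u) ∧
    (∀ i u v, i < b → SeqAt s i u → SeqAt s (i + 1) v → IsRamsey u e k v)

end Ramsey

end ArithFC
open FirstOrder Language
namespace ArithFC

section Alg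
variable {M : Type} [lang.Structure M]

instance instCS [h : Fact (PAm M)] : CommSemiring M where
  add := (· + ·)
  zero := 0
  one := 1
  mul := (· * ·)
  add_assoc := h.out.add_assoc
  add_comm := h.out.add_comm
  mul_assoc := h.out.mul_assoc
  mul_comm := h.out.mul_comm
  left_distrib := h.out.ldistrib
  right_distrib x y z := by
    rw [h.out.mul_comm, h.out.ldistrib, h.out.mul_comm z x, h.out.mul_comm z y]
  add_zero := h.out.add_zero
  zero_add x := by rw [h.out.add_comm, h.out.add_zero]
  mul_zero := h.out.mul_zero
  zero_mul x := by rw [h.out.mul_comm, h.out.mul_zero]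
  mul_one := h.out.mul_one
  one_mul x := by rw [h.out.mul_comm, h.out.mul_one]
  nsmul := nsmulRec
  npow := npowRec
  natCast := Nat.unaryCast

noncomputable instance instLO [h : Fact (PAm M)] : LinearOrder M where
  le := (· ≤ ·)
  lt := (· < ·)
  le_refl x := Or.inr rfl
  le_trans x y z h1 h2 := by
    rcases h1 with h1 | rfl
    · rcases h2 with h2 | rfl
      · exact Or.inl (h.out.lt_trans _ _ _ h1 h2)
      · exact Or.inl h1
    · exact h2
  lt_iff_le_not_ge x y := by
    constructor
    · intro h1
      refine ⟨Or.inl h1, ?_⟩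
      rintro (h2 | rfl)
      · exact h.out.lt_irrefl _ (h.out.lt_trans _ _ _ h1 h2)
      · exact h.out.lt_irrefl _ h1
    · rintro ⟨h1 | rfl, h2⟩
      · exact h1
      · exact absurd (Or.inr rfl) h2
  le_antisymm x y h1 h2 := by
    rcases h1 with h1 | rfl
    · rcases h2 with h2 | rfl
      · exact absurd (h.out.lt_trans _ _ _ h1 h2) (h.out.lt_irrefl _)
      · rfl
    · rfl
  le_total x y := by
    rcases h.out.lt_total x y with h1 | h1 | h1
    · exact Or.inl (Or.inl h1)
    · exact Or.inl (Or.inr h1)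
    · exact Or.inr (Or.inl h1)
  toDecidableLE := Classical.decRel _

instance instSOR [h : Fact (PAm M)] : IsStrictOrderedRing M where
  add_le_add_left a b hab c := by
    rcases hab with hab | rfl
    · exact Or.inl (h.out.add_lt_add _ _ _ hab)
    · exact Or.inr rfl
  le_of_add_le_add_left a b c hh := by
    by_contra hc
    have hc : c < b := lt_of_not_ge hc
    have := h.out.add_lt_add _ _ a hc
    rw [add_comm c a, add_comm b a] at this
    exact absurd hh (not_le_of_gt this)
  zero_le_one := Or.inl h.out.zero_lt_one
  exists_pair_ne := ⟨0, 1, fun e => h.out.lt_irrefl (0 : M) (by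
    have := h.out.zero_lt_one
    rwa [← e] at this)⟩
  mul_lt_mul_of_pos_left a ha b c hbc := by
    have := h.out.mul_lt_mul _ _ _ hbc ha
    simpa [mul_comm] using this
  mul_lt_mul_of_pos_right a ha b c hbc := h.out.mul_lt_mul _ _ _ hbc ha

variable [h : Fact (PAm M)]

instance instCO : CanonicallyOrderedAdd M where
  exists_add_of_le {a b} hab := by
    rcases hab with hab | rfl
    · obtain ⟨z, hz⟩ := h.out.sub_exists _ _ hab
      exact ⟨z, hz.symm⟩
    · exact ⟨0, (add_zero a).symm⟩
  le_add_self a b := by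
    have h1 : (0 : M) ≤ b := h.out.zero_le b
    simpa using add_le_add_left h1 a
  le_self_add a b := by
    have h1 : (0 : M) ≤ b := h.out.zero_le b
    simpa using add_le_add_right h1 a

theorem lt_succ {x y : M} : x < y + 1 ↔ x ≤ y := by
  constructor
  · intro hxy
    by_contra hc
    obtain ⟨d, rfl⟩ := exists_add_of_le (le_of_lt (lt_of_not_ge hc))
    have hd : 0 < d := by
      rcases (h.out.zero_le d) with h1 | h1
      · exact h1
      · subst h1; simp at hc
    have := h.out.discrete d hd
    exact absurd hxy (not_lt_of_ge (add_le_add_right this y))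
  · intro hxy
    exact lt_of_le_of_lt hxy (lt_add_of_pos_right y h.out.zero_lt_one)

theorem succ_le {x y : M} : x + 1 ≤ y ↔ x < y := by
  rw [← not_lt, lt_succ, not_le]

theorem not_lt_z {x : M} : ¬ x < 0 := not_lt_of_ge (h.out.zero_le x)

theorem lt_exists {x y : M} : x < y ↔ ∃ d, y = x + d + 1 := by
  constructor
  · intro hxy
    obtain ⟨d, hd⟩ := exists_add_of_le (succ_le.2 hxy)
    exact ⟨d, by rw [hd]; ring⟩
  · rintro ⟨d, rfl⟩
    exact lt_succ.2 (le_self_add)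

theorem zero_or_succ (x : M) : x = 0 ∨ ∃ d, x = d + 1 := by
  rcases (h.out.zero_le x) with h1 | h1
  · obtain ⟨d, hd⟩ := lt_exists.1 h1
    exact Or.inr ⟨d, by rw [hd]; ring⟩
  · exact Or.inl h1.symm

end Alg
end ArithFC

open FirstOrder Language
namespace ArithFC

section DefSem
set_option linter.unusedSectionVars false
variable {M : Type} [lang.Structure M]

/-- Values of a substitution. -/
def sval {α β : Type} {n n' : ℕ} (g : α ⊕ Fin n → lang.Term (β ⊕ Fin n')) (v : β → M)
    (xs : Fin n' → M) : α ⊕ Fin n → M := fun a => (g a).realize (Sum.elim v xs)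

/-- Lift of a substitution under a quantifier. -/
def slift {α β : Type} {n n' : ℕ} (g : α ⊕ Fin n → lang.Term (β ⊕ Fin n')) :
    α ⊕ Fin (n + 1) → lang.Term (β ⊕ Fin (n' + 1)) :=
  Sum.elim (fun a => (g (Sum.inl a)).liftAt 1 n')
    (Fin.lastCases (Term.var (Sum.inr (Fin.last n'))) (fun i => (g (Sum.inr i)).liftAt 1 n'))

theorem realize_lift1 {β : Type} {n' : ℕ} (t : lang.Term (β ⊕ Fin n')) (v : β → M)
    (xs : Fin n' → M) (x : M) :
    (t.liftAt 1 n').realize (Sum.elim v (Fin.snoc xs x : Fin (n' + 1) → M)) =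
      t.realize (Sum.elim v xs) := by
  rw [Term.realize_liftAt]
  congr 1
  funext a
  rcases a with a | i
  · rfl
  · have h2 : (if (i : ℕ) < n' then Fin.castAdd 1 i else i.addNat 1) = i.castSucc := by
      rw [if_pos i.2]; rfl
    simp only [Function.comp, Sum.map_inr, Sum.elim_inr]
    rw [h2, Fin.snoc_castSucc]

theorem sval_slift_inl {α β : Type} {n n' : ℕ} (g : α ⊕ Fin n → lang.Term (β ⊕ Fin n'))
    (v : β → M) (xs : Fin n' → M) (x : M) :
    (fun a => sval (slift g) v (Fin.snoc xs x) (Sum.inl a)) = fun a => sval g v xs (Sum.inl a) := by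
  funext a
  simp [sval, slift, realize_lift1]

theorem sval_slift_inr {α β : Type} {n n' : ℕ} (g : α ⊕ Fin n → lang.Term (β ⊕ Fin n'))
    (v : β → M) (xs : Fin n' → M) (x : M) :
    (fun a => sval (slift g) v (Fin.snoc xs x) (Sum.inr a)) =
      (Fin.snoc (fun a => sval g v xs (Sum.inr a)) x : Fin (n + 1) → M) := by
  funext a
  refine Fin.lastCases ?_ (fun i => ?_) a
  · simp [sval, slift]
  · simp [sval, slift, realize_lift1]

theorem sval_eq {α β : Type} {n n' : ℕ} (g : α ⊕ Fin n → lang.Term (β ⊕ Fin n'))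
    (v : β → M) (xs : Fin n' → M) :
    Sum.elim (fun a => sval g v xs (Sum.inl a)) (fun a => sval g v xs (Sum.inr a)) =
      sval g v xs := by
  funext a; rcases a <;> rfl

theorem realize_ltFm {α : Type} {n : ℕ} (t u : lang.Term (α ⊕ Fin n)) (v : α → M)
    (xs : Fin n → M) : (ltFm t u).Realize v xs ↔
      t.realize (Sum.elim v xs) < u.realize (Sum.elim v xs) := by
  unfold ltFm
  change Structure.RelMap _ _ ↔ Structure.RelMap _ _
  rw [iff_iff_eq]
  congr 1
  funext i
  refine Fin.cases rfl (fun i => ?_) i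
  refine Fin.cases rfl (fun i => i.elim0) i

theorem realize_bdAll {α : Type} {n : ℕ} (t : lang.Term (α ⊕ Fin n))
    (φ : lang.BoundedFormula α (n + 1)) (v : α → M) (xs : Fin n → M) :
    (BoundedFormula.all ((ltFm (Term.var (Sum.inr (Fin.last n))) (t.liftAt 1 n)).imp φ)).Realize
      v xs ↔ ∀ x, x < t.realize (Sum.elim v xs) → φ.Realize v (Fin.snoc xs x) := by
  rw [BoundedFormula.realize_all]
  refine forall_congr' fun x => ?_
  rw [BoundedFormula.realize_imp, realize_ltFm, realize_lift1]
  simp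

theorem d0_subst {α β : Type} {n : ℕ} {φ : lang.BoundedFormula α n} (h : IsDelta0 n φ) :
    ∀ (n' : ℕ) (g : α ⊕ Fin n → lang.Term (β ⊕ Fin n')),
      ∃ ψ : lang.BoundedFormula β n', IsDelta0 n' ψ ∧ ∀ (v : β → M) (xs : Fin n' → M),
        ψ.Realize v xs ↔ φ.Realize (fun a => sval g v xs (Sum.inl a))
          (fun a => sval g v xs (Sum.inr a)) := by
  induction h with
  | falsum n => exact fun n' g => ⟨_, .falsum n', fun v xs => Iff.rfl⟩
  | equal n t u =>
    intro n' g
    refine ⟨_, .equal n' (t.subst g) (u.subst g), fun v xs => ?_⟩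
    change (t.subst g).realize _ = (u.subst g).realize _ ↔ t.realize _ = u.realize _
    rw [Term.realize_subst, Term.realize_subst, sval_eq]
    rfl
  | rel n l R ts =>
    intro n' g
    refine ⟨_, .rel n' l R (fun i => (ts i).subst g), fun v xs => ?_⟩
    change Structure.RelMap _ _ ↔ Structure.RelMap _ _
    rw [iff_iff_eq]
    congr 1
    funext i
    rw [Term.realize_subst, sval_eq]
    rfl
  | imp n h1 h2 ih1 ih2 =>
    intro n' g
    obtain ⟨ψ1, p1, q1⟩ := ih1 n' g
    obtain ⟨ψ2, p2, q2⟩ := ih2 n' g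
    refine ⟨_, .imp n' p1 p2, fun v xs => ?_⟩
    rw [BoundedFormula.realize_imp, BoundedFormula.realize_imp, q1, q2]
  | bdAll n t h ih =>
    intro n' g
    obtain ⟨ψ1, p1, q1⟩ := ih (n' + 1) (slift g)
    refine ⟨_, .bdAll n' (t.subst g) p1, fun v xs => ?_⟩
    rw [realize_bdAll, realize_bdAll, Term.realize_subst, sval_eq]
    refine forall_congr' fun x => ?_
    rw [q1, sval_slift_inl, sval_slift_inr]
    rfl

theorem sg_subst {α β : Type} {m n : ℕ} {φ : lang.BoundedFormula α n} (h : SigmaFm m n φ) :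
    ∀ (n' : ℕ) (g : α ⊕ Fin n → lang.Term (β ⊕ Fin n')),
      (∃ ψ : lang.BoundedFormula β n', SigmaFm m n' ψ ∧ ∀ (v : β → M) (xs : Fin n' → M),
        ψ.Realize v xs ↔ φ.Realize (fun a => sval g v xs (Sum.inl a))
          (fun a => sval g v xs (Sum.inr a))) ∧
      (∃ ψ : lang.BoundedFormula β n', PiFm m n' ψ ∧ ∀ (v : β → M) (xs : Fin n' → M),
        ψ.Realize v xs ↔ ¬ φ.Realize (fun a => sval g v xs (Sum.inl a))
          (fun a => sval g v xs (Sum.inr a))) := by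
  refine SigmaFm.rec (motive_1 := fun m n φ _ => ∀ (n' : ℕ) (g : α ⊕ Fin n → lang.Term (β ⊕ Fin n')),
      (∃ ψ : lang.BoundedFormula β n', SigmaFm m n' ψ ∧ ∀ (v : β → M) (xs : Fin n' → M),
        ψ.Realize v xs ↔ φ.Realize (fun a => sval g v xs (Sum.inl a))
          (fun a => sval g v xs (Sum.inr a))) ∧
      (∃ ψ : lang.BoundedFormula β n', PiFm m n' ψ ∧ ∀ (v : β → M) (xs : Fin n' → M),
        ψ.Realize v xs ↔ ¬ φ.Realize (fun a => sval g v xs (Sum.inl a))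
          (fun a => sval g v xs (Sum.inr a))))
    (motive_2 := fun m n φ _ => ∀ (n' : ℕ) (g : α ⊕ Fin n → lang.Term (β ⊕ Fin n')),
      (∃ ψ : lang.BoundedFormula β n', PiFm m n' ψ ∧ ∀ (v : β → M) (xs : Fin n' → M),
        ψ.Realize v xs ↔ φ.Realize (fun a => sval g v xs (Sum.inl a))
          (fun a => sval g v xs (Sum.inr a))) ∧
      (∃ ψ : lang.BoundedFormula β n', SigmaFm m n' ψ ∧ ∀ (v : β → M) (xs : Fin n' → M),
        ψ.Realize v xs ↔ ¬ φ.Realize (fun a => sval g v xs (Sum.inl a))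
          (fun a => sval g v xs (Sum.inr a)))) ?_ ?_ ?_ ?_ ?_ ?_ h
  · intro m n φ h n' g
    obtain ⟨ψ, h1, h2⟩ := d0_subst (M := M) h n' g
    exact ⟨⟨ψ, .delta0 _ _ h1, h2⟩, ⟨_, .delta0 _ _ (.imp _ h1 (.falsum _)), fun v xs => by
      rw [BoundedFormula.realize_imp, h2]; rfl⟩⟩
  · intro m n φ h ih n' g
    obtain ⟨⟨ψ1, p1, q1⟩, ⟨ψ2, p2, q2⟩⟩ := ih n' g
    exact ⟨⟨ψ1, .ofPi _ _ p1, q1⟩, ⟨ψ2, .ofSigma _ _ p2, q2⟩⟩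
  · intro m n φ h ih n' g
    obtain ⟨⟨ψ1, p1, q1⟩, ⟨ψ2, p2, q2⟩⟩ := ih (n' + 1) (slift g)
    refine ⟨⟨_, .ex _ _ p1, fun v xs => ?_⟩, ⟨_, .all _ _ p2, fun v xs => ?_⟩⟩
    · rw [BoundedFormula.realize_ex, BoundedFormula.realize_ex]
      refine exists_congr fun x => ?_
      rw [q1, sval_slift_inl, sval_slift_inr]
    · rw [BoundedFormula.realize_all, BoundedFormula.realize_ex, not_exists]
      refine forall_congr' fun x => ?_
      rw [q2, sval_slift_inl, sval_slift_inr]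
  · intro m n φ h n' g
    obtain ⟨ψ, h1, h2⟩ := d0_subst (M := M) h n' g
    exact ⟨⟨ψ, .delta0 _ _ h1, h2⟩, ⟨_, .delta0 _ _ (.imp _ h1 (.falsum _)), fun v xs => by
      rw [BoundedFormula.realize_imp, h2]; rfl⟩⟩
  · intro m n φ h ih n' g
    obtain ⟨⟨ψ1, p1, q1⟩, ⟨ψ2, p2, q2⟩⟩ := ih n' g
    exact ⟨⟨ψ1, .ofSigma _ _ p1, q1⟩, ⟨ψ2, .ofPi _ _ p2, q2⟩⟩
  · intro m n φ h ih n' g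
    obtain ⟨⟨ψ1, p1, q1⟩, ⟨ψ2, p2, q2⟩⟩ := ih (n' + 1) (slift g)
    refine ⟨⟨_, .all _ _ p1, fun v xs => ?_⟩, ⟨_, .ex _ _ p2, fun v xs => ?_⟩⟩
    · rw [BoundedFormula.realize_all, BoundedFormula.realize_all]
      refine forall_congr' fun x => ?_
      rw [q1, sval_slift_inl, sval_slift_inr]
    · rw [BoundedFormula.realize_ex, BoundedFormula.realize_all, not_forall]
      refine exists_congr fun x => ?_
      rw [q2, sval_slift_inl, sval_slift_inr]

/-- Semantic definability with parameters. -/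
def IsT {k : ℕ} (f : (Fin k → M) → M) : Prop :=
  ∃ t : lang.Term (M ⊕ Fin k), ∀ v, f v = t.realize (Sum.elim id v)

def Dz {k : ℕ} (R : (Fin k → M) → Prop) : Prop :=
  ∃ φ : lang.BoundedFormula M k, IsDelta0 k φ ∧ ∀ v, R v ↔ φ.Realize id v

def Sg (m : ℕ) {k : ℕ} (R : (Fin k → M) → Prop) : Prop :=
  ∃ φ : lang.BoundedFormula M k, SigmaFm m k φ ∧ ∀ v, R v ↔ φ.Realize id v

def Pg (m : ℕ) {k : ℕ} (R : (Fin k → M) → Prop) : Prop :=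
  Sg m (fun v => ¬ R v)

theorem IsT.var {k : ℕ} (i : Fin k) : IsT (fun v : Fin k → M => v i) :=
  ⟨Term.var (Sum.inr i), fun _ => rfl⟩
theorem IsT.const {k : ℕ} (a : M) : IsT (fun _ : Fin k → M => a) :=
  ⟨Term.var (Sum.inl a), fun _ => rfl⟩
theorem IsT.add {k : ℕ} {f g : (Fin k → M) → M} (hf : IsT f) (hg : IsT g) :
    IsT (fun v => f v + g v) := by
  obtain ⟨t, ht⟩ := hf
  obtain ⟨u, hu⟩ := hg
  refine ⟨Term.func (L := lang) (l := 2) Func.add ![t, u], fun v => ?_⟩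
  beta_reduce
  rw [ht, hu]
  change Structure.funMap (L := lang) _ _ = Structure.funMap (L := lang) _ _
  congr 1
  funext i
  refine Fin.cases rfl (fun i => ?_) i
  exact Fin.cases rfl (fun i => i.elim0) i
theorem IsT.mul {k : ℕ} {f g : (Fin k → M) → M} (hf : IsT f) (hg : IsT g) :
    IsT (fun v => f v * g v) := by
  obtain ⟨t, ht⟩ := hf
  obtain ⟨u, hu⟩ := hg
  refine ⟨Term.func (L := lang) (l := 2) Func.mul ![t, u], fun v => ?_⟩
  beta_reduce
  rw [ht, hu]
  change Structure.funMap (L := lang) _ _ = Structure.funMap (L := lang) _ _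
  congr 1
  funext i
  refine Fin.cases rfl (fun i => ?_) i
  exact Fin.cases rfl (fun i => i.elim0) i

theorem Dz.congr {k : ℕ} {R R' : (Fin k → M) → Prop} (h : Dz R') (e : ∀ v, R v ↔ R' v) : Dz R := by
  have : R = R' := funext fun v => propext (e v)
  rwa [this]
theorem Sg.congr {m k : ℕ} {R R' : (Fin k → M) → Prop} (h : Sg m R') (e : ∀ v, R v ↔ R' v) :
    Sg m R := by
  have : R = R' := funext fun v => propext (e v)
  rwa [this]
theorem Pg.congr {m k : ℕ} {R R' : (Fin k → M) → Prop} (h : Pg m R') (e : ∀ v, R v ↔ R' v) :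
    Pg m R := by
  have : R = R' := funext fun v => propext (e v)
  rwa [this]

theorem Dz.lt {k : ℕ} {f g : (Fin k → M) → M} (hf : IsT f) (hg : IsT g) :
    Dz (fun v => f v < g v) := by
  obtain ⟨t, ht⟩ := hf
  obtain ⟨u, hu⟩ := hg
  exact ⟨_, .rel _ _ _ _, fun v => by beta_reduce; rw [ht, hu]; exact (realize_ltFm t u id v).symm⟩
theorem Dz.eq {k : ℕ} {f g : (Fin k → M) → M} (hf : IsT f) (hg : IsT g) :
    Dz (fun v => f v = g v) := by
  obtain ⟨t, ht⟩ := hf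
  obtain ⟨u, hu⟩ := hg
  exact ⟨_, .equal _ t u, fun v => by beta_reduce; rw [ht, hu]; rfl⟩
theorem Dz.imp {k : ℕ} {R S : (Fin k → M) → Prop} (hR : Dz R) (hS : Dz S) :
    Dz (fun v => R v → S v) := by
  obtain ⟨t, ht, ht'⟩ := hR
  obtain ⟨u, hu, hu'⟩ := hS
  exact ⟨_, .imp _ ht hu, fun v => by rw [BoundedFormula.realize_imp, ← ht', ← hu']⟩
theorem Dz.false {k : ℕ} : Dz (fun _ : Fin k → M => False) := ⟨_, .falsum _, fun _ => Iff.rfl⟩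
theorem Dz.not {k : ℕ} {R : (Fin k → M) → Prop} (hR : Dz R) : Dz (fun v => ¬ R v) :=
  (hR.imp Dz.false)
theorem Dz.or {k : ℕ} {R S : (Fin k → M) → Prop} (hR : Dz R) (hS : Dz S) :
    Dz (fun v => R v ∨ S v) :=
  (hR.not.imp hS).congr fun v => by tauto
theorem Dz.and {k : ℕ} {R S : (Fin k → M) → Prop} (hR : Dz R) (hS : Dz S) :
    Dz (fun v => R v ∧ S v) :=
  (hR.imp hS.not).not.congr fun v => by tauto
theorem Dz.iff {k : ℕ} {R S : (Fin k → M) → Prop} (hR : Dz R) (hS : Dz S) :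
    Dz (fun v => R v ↔ S v) :=
  ((hR.imp hS).and (hS.imp hR)).congr fun v => by tauto
theorem Dz.le {k : ℕ} {f g : (Fin k → M) → M} (hf : IsT f) (hg : IsT g) :
    Dz (fun v => f v ≤ g v) := (Dz.lt hf hg).or (Dz.eq hf hg)

theorem init_snoc' {k : ℕ} (v : Fin k → M) (x : M) :
    (fun i : Fin k => (Fin.snoc v x : Fin (k + 1) → M) i.castSucc) = v := by
  funext i; simp
theorem last_snoc' {k : ℕ} (v : Fin k → M) (x : M) :
    (Fin.snoc v x : Fin (k + 1) → M) (Fin.last k) = x := by simp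

theorem Dz.ball {k : ℕ} {f : (Fin k → M) → M} {R : (Fin k → M) → M → Prop} (hf : IsT f)
    (hR : Dz (fun w : Fin (k + 1) → M => R (fun i => w i.castSucc) (w (Fin.last k)))) :
    Dz (fun v => ∀ x, x < f v → R v x) := by
  obtain ⟨t, ht⟩ := hf
  obtain ⟨φ, h1, h2⟩ := hR
  refine ⟨_, .bdAll _ t h1, fun v => ?_⟩
  rw [realize_bdAll]
  refine forall_congr' fun x => ?_
  rw [← h2]
  beta_reduce
  rw [init_snoc', last_snoc', ht]
theorem Dz.bex {k : ℕ} {f : (Fin k → M) → M} {R : (Fin k → M) → M → Prop} (hf : IsT f)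
    (hR : Dz (fun w : Fin (k + 1) → M => R (fun i => w i.castSucc) (w (Fin.last k)))) :
    Dz (fun v => ∃ x, x < f v ∧ R v x) :=
  (Dz.ball (R := fun v x => ¬ R v x) hf hR.not).not.congr fun v => by push Not; rfl

theorem Sg.ofDz {m k : ℕ} {R : (Fin k → M) → Prop} (h : Dz R) : Sg m R := by
  obtain ⟨φ, h1, h2⟩ := h
  exact ⟨φ, .delta0 _ _ h1, h2⟩
theorem Pg.ofDz {m k : ℕ} {R : (Fin k → M) → Prop} (h : Dz R) : Pg m R := Sg.ofDz h.not

theorem Dz.ofSg {k : ℕ} {R : (Fin k → M) → Prop} (h : Sg 0 R) : Dz R := by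
  obtain ⟨φ, h1, h2⟩ := h
  cases h1 with
  | delta0 _ _ h => exact ⟨φ, h, h2⟩

/-- Substitution of terms. -/
theorem Sg.subst {m k l : ℕ} {R : (Fin k → M) → Prop} (h : Sg m R) {f : Fin k → (Fin l → M) → M}
    (hf : ∀ i, IsT (f i)) : Sg m (fun v => R (fun i => f i v)) := by
  obtain ⟨φ, h1, h2⟩ := h
  choose t ht using hf
  obtain ⟨⟨ψ, h3, h4⟩, -⟩ := sg_subst (M := M) h1 l (Sum.elim (fun a => Term.var (Sum.inl a)) t)
  refine ⟨ψ, h3, fun v => ?_⟩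
  beta_reduce
  rw [h4, h2]
  simp only [sval, Sum.elim_inl, Sum.elim_inr, ← ht]
  rfl
theorem Dz.subst {k l : ℕ} {R : (Fin k → M) → Prop} (h : Dz R) {f : Fin k → (Fin l → M) → M}
    (hf : ∀ i, IsT (f i)) : Dz (fun v => R (fun i => f i v)) :=
  Dz.ofSg ((Sg.ofDz (m := 0) h).subst hf)
theorem Pg.subst {m k l : ℕ} {R : (Fin k → M) → Prop} (h : Pg m R) {f : Fin k → (Fin l → M) → M}
    (hf : ∀ i, IsT (f i)) : Pg m (fun v => R (fun i => f i v)) := Sg.subst (R := fun v => ¬ R v) h hf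

theorem pgIff {m k : ℕ} {R : (Fin k → M) → Prop} :
    Pg m R ↔ ∃ φ : lang.BoundedFormula M k, PiFm m k φ ∧ ∀ v, R v ↔ φ.Realize id v := by
  constructor
  · rintro ⟨φ, h1, h2⟩
    obtain ⟨-, ⟨ψ, h3, h4⟩⟩ := sg_subst (M := M) h1 k (fun a => Term.var a)
    refine ⟨ψ, h3, fun v => ?_⟩
    have h5 := h2 v
    beta_reduce at h5
    rw [h4, ← not_iff_not, h5, not_not]
    rfl
  · rintro ⟨φ, h1, h2⟩
    have := PiFm.rec (motive_1 := fun m n φ _ => True)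
      (motive_2 := fun m n φ _ => ∃ ψ : lang.BoundedFormula M n, SigmaFm m n ψ ∧
        ∀ v, ψ.Realize id v ↔ ¬ φ.Realize (id : M → M) v) ?_ ?_ ?_ ?_ ?_ ?_ h1
    · obtain ⟨ψ, h3, h4⟩ := this
      exact ⟨ψ, h3, fun v => by beta_reduce; rw [h4, h2]⟩
    · intros; trivial
    · intros; trivial
    · intros; trivial
    · intro m n φ h
      exact ⟨_, .delta0 _ _ (.imp _ h (.falsum _)), fun v => by
        rw [BoundedFormula.realize_imp]; rfl⟩
    · intro m n φ h _
      obtain ⟨-, ⟨ψ, h3, h4⟩⟩ := sg_subst (M := M) h n (fun a => Term.var a)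
      exact ⟨ψ, .ofPi _ _ h3, fun v => h4 id v⟩
    · rintro m n φ h ⟨ψ, h3, h4⟩
      refine ⟨_, .ex _ _ h3, fun v => ?_⟩
      rw [BoundedFormula.realize_ex, BoundedFormula.realize_all, not_forall]
      exact exists_congr fun x => h4 _

theorem Sg.ofPg {m k : ℕ} {R : (Fin k → M) → Prop} (h : Pg m R) : Sg (m + 1) R := by
  obtain ⟨φ, h1, h2⟩ := pgIff.1 h
  exact ⟨φ, .ofPi _ _ h1, h2⟩
theorem Sg.not {m k : ℕ} {R : (Fin k → M) → Prop} (h : Sg m R) : Pg m (fun v => ¬ R v) :=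
  Sg.congr h fun _ => not_not
theorem Pg.not {m k : ℕ} {R : (Fin k → M) → Prop} (h : Pg m R) : Sg m (fun v => ¬ R v) := h
theorem Pg.ofSg {m k : ℕ} {R : (Fin k → M) → Prop} (h : Sg m R) : Pg (m + 1) R :=
  Sg.ofPg h.not
theorem Sg.ex {m k : ℕ} {R : (Fin k → M) → M → Prop}
    (hR : Sg (m + 1) (fun w : Fin (k + 1) → M => R (fun i => w i.castSucc) (w (Fin.last k)))) :
    Sg (m + 1) (fun v => ∃ x, R v x) := by
  obtain ⟨φ, h1, h2⟩ := hR
  refine ⟨_, .ex _ _ h1, fun v => ?_⟩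
  rw [BoundedFormula.realize_ex]
  refine exists_congr fun x => ?_
  rw [← h2]
  beta_reduce
  rw [init_snoc', last_snoc']

/-- Induction principle for `Sg (m+1)`. -/
theorem Sg.ind {m : ℕ} {P : ∀ k : ℕ, ((Fin k → M) → Prop) → Prop}
    (base : ∀ k (R : (Fin k → M) → Prop), Pg m R → P k R)
    (step : ∀ k (R : (Fin (k + 1) → M) → Prop), Sg (m + 1) R → P (k + 1) R →
      P k (fun v => ∃ x, R (Fin.snoc v x)))
    {k : ℕ} {R : (Fin k → M) → Prop} (h : Sg (m + 1) R) : P k R := by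
  obtain ⟨φ, h1, h2⟩ := h
  have : R = fun v => φ.Realize id v := funext fun v => propext (h2 v)
  rw [this]
  refine SigmaFm.rec (motive_1 := fun m' n φ _ => m' = m + 1 → P n (fun v => φ.Realize id v))
    (motive_2 := fun m n φ _ => True) ?_ ?_ ?_ ?_ ?_ ?_ h1 rfl
  · intro m n φ h _
    exact base _ _ (Pg.ofDz ⟨φ, h, fun _ => Iff.rfl⟩)
  · intro m n φ h _ e
    cases e
    exact base _ _ (pgIff.2 ⟨φ, h, fun _ => Iff.rfl⟩)
  · intro m n φ h ih e
    cases e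
    have := step _ _ ⟨φ, h, fun _ => Iff.rfl⟩ (ih rfl)
    simpa only [BoundedFormula.realize_ex] using this
  all_goals intros; trivial

theorem Sg.mono1 {m k : ℕ} {R : (Fin k → M) → Prop} (h : Sg m R) : Sg (m + 1) R := by
  induction m generalizing k with
  | zero => exact Sg.ofDz (Dz.ofSg h)
  | succ m ih =>
    refine Sg.ind (P := fun k R => Sg (m + 1 + 1) R) ?_ ?_ h
    · intro k R hR
      exact Sg.ofPg (ih hR)
    · intro k R _ hR
      refine Sg.ex (R := fun v x => R (Fin.snoc v x)) (hR.congr fun w => ?_)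
      have : (Fin.snoc (fun i => w i.castSucc) (w (Fin.last k)) : Fin (k + 1) → M) = w :=
        Fin.snoc_init_self w
      rw [this]
theorem Sg.mono {m m' k : ℕ} {R : (Fin k → M) → Prop} (h : Sg m R) (hm : m ≤ m') : Sg m' R := by
  induction hm with
  | refl => exact h
  | step _ ih => exact ih.mono1
theorem Pg.mono {m m' k : ℕ} {R : (Fin k → M) → Prop} (h : Pg m R) (hm : m ≤ m') : Pg m' R :=
  Sg.mono (R := fun v => ¬ R v) h hm

theorem snoc_split {k : ℕ} (w : Fin (k + 1) → M) :
    (Fin.snoc (fun i => w i.castSucc) (w (Fin.last k)) : Fin (k + 1) → M) = w :=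
  Fin.snoc_init_self w

theorem Sg.exs {m k : ℕ} {R : (Fin (k + 1) → M) → Prop} (hR : Sg (m + 1) R) :
    Sg (m + 1) (fun v => ∃ x, R (Fin.snoc v x)) := by
  refine Sg.ex (R := fun v x => R (Fin.snoc v x)) (hR.congr fun w => ?_)
  rw [snoc_split]

theorem Sg.weak {m k : ℕ} {R : (Fin k → M) → Prop} (hR : Sg m R) :
    Sg m (fun w : Fin (k + 1) → M => R (fun i => w i.castSucc)) :=
  hR.subst fun i => IsT.var i.castSucc

theorem Sg.op_aux {m : ℕ} (op : Prop → Prop → Prop)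
    (h1 : ∀ p (q : M → Prop), op p (∃ x, q x) ↔ ∃ x, op p (q x))
    (h2 : ∀ p (q : M → Prop), op (∃ x, q x) p ↔ ∃ x, op (q x) p)
    (h0 : ∀ k (R S : (Fin k → M) → Prop), Pg m R → Pg m S → Pg m (fun v => op (R v) (S v)))
    {k : ℕ} {R S : (Fin k → M) → Prop} (hR : Sg (m + 1) R) (hS : Sg (m + 1) S) :
    Sg (m + 1) (fun v => op (R v) (S v)) := by
  refine Sg.ind (P := fun k R => ∀ S : (Fin k → M) → Prop, Sg (m + 1) S →
    Sg (m + 1) (fun v => op (R v) (S v))) ?_ ?_ hR S hS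
  · intro k R hR S hS
    refine Sg.ind (P := fun k S => ∀ R : (Fin k → M) → Prop, Pg m R →
      Sg (m + 1) (fun v => op (R v) (S v))) ?_ ?_ hS R hR
    · intro k S hS R hR
      exact Sg.ofPg (h0 _ _ _ hR hS)
    · intro k S hS ih R hR
      simp only [h1]
      have := (ih _ (Pg.subst hR fun i => IsT.var i.castSucc)).exs
      simpa only [init_snoc'] using this
  · intro k R hR ih S hS
    simp only [h2]
    have := (ih _ hS.weak).exs
    simpa only [init_snoc'] using this

theorem Sg.andor [Nonempty M] (m : ℕ) : (∀ (k : ℕ) (R S : (Fin k → M) → Prop), Sg m R → Sg m S →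
    Sg m (fun v => R v ∧ S v)) ∧ (∀ (k : ℕ) (R S : (Fin k → M) → Prop), Sg m R → Sg m S →
    Sg m (fun v => R v ∨ S v)) := by
  induction m with
  | zero => exact ⟨fun k R S hR hS => Sg.ofDz ((Dz.ofSg hR).and (Dz.ofSg hS)),
      fun k R S hR hS => Sg.ofDz ((Dz.ofSg hR).or (Dz.ofSg hS))⟩
  | succ m ih =>
    refine ⟨fun k R S hR hS => Sg.op_aux And ?_ ?_ ?_ hR hS,
      fun k R S hR hS => Sg.op_aux Or ?_ ?_ ?_ hR hS⟩
    · intros; simp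
    · intros; simp
    · intro k R S hR hS
      exact Sg.congr (ih.2 _ _ _ hR hS) fun v => by tauto
    · intros; simp [exists_or]
    · intros; simp [exists_or]
    · intro k R S hR hS
      exact Sg.congr (ih.1 _ _ _ hR hS) fun v => by tauto

theorem fin_supp {k : ℕ} (φ : lang.BoundedFormula M k) : ∃ S : Finset M, ∀ v v' : M → M,
    (∀ a ∈ S, v a = v' a) → ∀ xs, φ.Realize v xs ↔ φ.Realize v' xs := by
  classical
  have ht : ∀ {k : ℕ} (t : lang.Term (M ⊕ Fin k)), ∃ S : Finset M, ∀ v v' : M → M,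
      (∀ a ∈ S, v a = v' a) → ∀ xs : Fin k → M,
        t.realize (Sum.elim v xs) = t.realize (Sum.elim v' xs) := by
    intro k t
    induction t with
    | var a =>
      rcases a with a | i
      · exact ⟨{a}, fun v v' h xs => h a (by simp)⟩
      · exact ⟨∅, fun v v' h xs => rfl⟩
    | func f ts ih =>
      choose S hS using ih
      refine ⟨Finset.univ.biUnion S, fun v v' h xs => ?_⟩
      rw [Term.realize_func, Term.realize_func]
      congr 1
      funext i
      exact hS i v v' (fun a ha => h a (by simp; exact ⟨i, ha⟩)) xs
  induction φ with
  | falsum => exact ⟨∅, fun v v' h xs => Iff.rfl⟩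
  | equal t u =>
    obtain ⟨S1, h1⟩ := ht t
    obtain ⟨S2, h2⟩ := ht u
    refine ⟨S1 ∪ S2, fun v v' h xs => ?_⟩
    change _ = _ ↔ _ = _
    rw [h1 v v' (fun a ha => h a (by simp [ha])) xs, h2 v v' (fun a ha => h a (by simp [ha])) xs]
  | rel R ts =>
    choose S hS using fun i => ht (ts i)
    refine ⟨Finset.univ.biUnion S, fun v v' h xs => ?_⟩
    change Structure.RelMap _ _ ↔ Structure.RelMap _ _
    rw [iff_iff_eq]
    congr 1
    funext i
    exact hS i v v' (fun a ha => h a (by simp; exact ⟨i, ha⟩)) xs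
  | imp φ ψ ih1 ih2 =>
    obtain ⟨S1, h1⟩ := ih1
    obtain ⟨S2, h2⟩ := ih2
    refine ⟨S1 ∪ S2, fun v v' h xs => ?_⟩
    rw [BoundedFormula.realize_imp, BoundedFormula.realize_imp,
      h1 v v' (fun a ha => h a (by simp [ha])) xs, h2 v v' (fun a ha => h a (by simp [ha])) xs]
  | all φ ih =>
    obtain ⟨S1, h1⟩ := ih
    refine ⟨S1, fun v v' h xs => ?_⟩
    rw [BoundedFormula.realize_all, BoundedFormula.realize_all]
    exact forall_congr' fun x => h1 v v' h _

theorem sg_iff_isSigmaDef {m k : ℕ} {R : (Fin k → M) → Prop} : Sg m R ↔ IsSigmaDef m M R := by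
  classical
  constructor
  · rintro ⟨φ, h1, h2⟩
    obtain ⟨S, hS⟩ := fin_supp φ
    obtain ⟨⟨ψ, h3, h4⟩, -⟩ := sg_subst (M := M) (β := Fin k ⊕ Fin S.card) h1 0
      (Sum.elim (fun a => if h : a ∈ S then Term.var (Sum.inl (Sum.inr (S.equivFin ⟨a, h⟩)))
        else Constants.term (L := lang) Func.zero)
        (fun i => Term.var (Sum.inl (Sum.inl i))))
    refine ⟨S.card, ψ, fun i => (S.equivFin.symm i : M), h3, fun v => ?_⟩
    rw [h2, h4]
    rw [hS id _ ?_]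
    · rfl
    · intro a ha
      simp [sval, ha]
  · rintro ⟨p, φ, w, h1, h2⟩
    obtain ⟨⟨ψ, h3, h4⟩, -⟩ := sg_subst (M := M) (β := M) h1 k
      (Sum.elim (Sum.elim (fun i => Term.var (Sum.inr i)) (fun j => Term.var (Sum.inl (w j))))
        (fun i => i.elim0))
    refine ⟨ψ, h3, fun v => ?_⟩
    rw [h4, h2]
    have e1 : (Sum.elim v w) = fun a => sval (M := M) (Sum.elim (Sum.elim (fun i => Term.var (Sum.inr i)) (fun j => Term.var (Sum.inl (w j)))) (fun i : Fin 0 => i.elim0) : (Fin k ⊕ Fin p) ⊕ Fin 0 → lang.Term (M ⊕ Fin k)) id v (Sum.inl a) := by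
      funext a
      rcases a with a | a <;> rfl
    rw [e1]
    have e2 : ∀ a b : Fin 0 → M, a = b := fun a b => funext fun i => i.elim0
    rw [e2 finZeroElim]

end DefSem
end ArithFC

open FirstOrder Language
set_option linter.all false
namespace ArithFC

section Clos
variable {M : Type} [lang.Structure M] [h : Fact (PAm M)]

/-- Tuples of term functions. -/
def IsTs {l k : ℕ} (F : (Fin l → M) → (Fin k → M)) : Prop := ∀ i, IsT (fun v => F v i)

theorem IsTs.snoc {l k : ℕ} {F : (Fin l → M) → (Fin k → M)} {f : (Fin l → M) → M}
    (hF : IsTs F) (hf : IsT f) : IsTs (fun v => (Fin.snoc (F v) (f v) : Fin (k + 1) → M)) := by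
  intro i
  refine Fin.lastCases ?_ (fun j => ?_) i
  · simpa using hf
  · simpa using hF j
theorem IsTs.const {l k : ℕ} (a : Fin k → M) : IsTs (fun _ : Fin l → M => a) :=
  fun i => IsT.const (a i)
theorem IsTs.id {l : ℕ} : IsTs (fun v : Fin l → M => v) := fun i => IsT.var i
theorem IsTs.init {l k : ℕ} {F : (Fin l → M) → (Fin k → M)} (hF : IsTs F) :
    IsTs (fun v : Fin (l + 1) → M => F (fun i => v i.castSucc)) := by
  intro i
  have := (hF i)
  obtain ⟨t, ht⟩ := this
  refine ⟨t.subst (Sum.elim (fun a => Term.var (Sum.inl a))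
    (fun i => Term.var (Sum.inr i.castSucc))), fun v => ?_⟩
  rw [Term.realize_subst]
  simp only [ht]
  congr 1
  funext a
  rcases a with a | a <;> simp
theorem Sg.comp {m k l : ℕ} {R : (Fin k → M) → Prop} (hR : Sg m R) {F : (Fin l → M) → (Fin k → M)}
    (hF : IsTs F) : Sg m (fun v => R (F v)) := hR.subst (f := fun i v => F v i) hF
theorem Pg.comp {m k l : ℕ} {R : (Fin k → M) → Prop} (hR : Pg m R) {F : (Fin l → M) → (Fin k → M)}
    (hF : IsTs F) : Pg m (fun v => R (F v)) := hR.subst (f := fun i v => F v i) hF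

theorem Sg.and {m k : ℕ} {R S : (Fin k → M) → Prop} (hR : Sg m R) (hS : Sg m S) :
    Sg m (fun v => R v ∧ S v) := by
  haveI : Nonempty M := ⟨0⟩
  exact (Sg.andor m).1 k R S hR hS
theorem Sg.or {m k : ℕ} {R S : (Fin k → M) → Prop} (hR : Sg m R) (hS : Sg m S) :
    Sg m (fun v => R v ∨ S v) := by
  haveI : Nonempty M := ⟨0⟩
  exact (Sg.andor m).2 k R S hR hS
theorem Pg.and {m k : ℕ} {R S : (Fin k → M) → Prop} (hR : Pg m R) (hS : Pg m S) :
    Pg m (fun v => R v ∧ S v) := (Sg.or hR hS).congr fun v => by tauto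
theorem Pg.or {m k : ℕ} {R S : (Fin k → M) → Prop} (hR : Pg m R) (hS : Pg m S) :
    Pg m (fun v => R v ∨ S v) := (Sg.and hR hS).congr fun v => by tauto
theorem Pg.imp {m k : ℕ} {R S : (Fin k → M) → Prop} (hR : Sg m R) (hS : Pg m S) :
    Pg m (fun v => R v → S v) := (Pg.or hR.not hS).congr fun v => by tauto
theorem Sg.imp {m k : ℕ} {R S : (Fin k → M) → Prop} (hR : Pg m R) (hS : Sg m S) :
    Sg m (fun v => R v → S v) := (Sg.or hR.not hS).congr fun v => by tauto
theorem Pg.all {m k : ℕ} {R : (Fin k → M) → M → Prop}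
    (hR : Pg (m + 1) (fun w : Fin (k + 1) → M => R (fun i => w i.castSucc) (w (Fin.last k)))) :
    Pg (m + 1) (fun v => ∀ x, R v x) :=
  (Sg.ex (R := fun v x => ¬ R v x) hR).congr fun v => by push Not; rfl

theorem IsT.weak {k : ℕ} {f : (Fin k → M) → M} (hf : IsT f) :
    IsT (fun w : Fin (k + 1) → M => f (fun i => w i.castSucc)) :=
  IsTs.init (F := fun v (_ : Fin 1) => f v) (fun _ => hf) 0

theorem Sg.bex {m k : ℕ} {f : (Fin k → M) → M} {R : (Fin k → M) → M → Prop} (hf : IsT f)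
    (hR : Sg m (fun w : Fin (k + 1) → M => R (fun i => w i.castSucc) (w (Fin.last k)))) :
    Sg m (fun v => ∃ x, x < f v ∧ R v x) := by
  cases m with
  | zero => exact Sg.ofDz (Dz.bex hf (Dz.ofSg hR))
  | succ m =>
    exact Sg.ex (R := fun v x => x < f v ∧ R v x)
      (Sg.and (Sg.ofDz (Dz.lt (IsT.var _) hf.weak)) hR)
theorem Pg.ball {m k : ℕ} {f : (Fin k → M) → M} {R : (Fin k → M) → M → Prop} (hf : IsT f)
    (hR : Pg m (fun w : Fin (k + 1) → M => R (fun i => w i.castSucc) (w (Fin.last k)))) :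
    Pg m (fun v => ∀ x, x < f v → R v x) :=
  (Sg.bex (R := fun v x => ¬ R v x) hf hR).congr fun v => by push Not; rfl

/-- Closure of Sg m under bounded universal quantifiers. -/
def BallCl (M : Type) [lang.Structure M] (m : ℕ) : Prop :=
  ∀ (k : ℕ) (f : (Fin k → M) → M) (R : (Fin k → M) → M → Prop), IsT f →
    Sg m (fun w : Fin (k + 1) → M => R (fun i => w i.castSucc) (w (Fin.last k))) →
    Sg m (fun v => ∀ x, x < f v → R v x)

theorem BallCl.bex {m k : ℕ} (hb : BallCl M m) {f : (Fin k → M) → M} {R : (Fin k → M) → M → Prop}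
    (hf : IsT f)
    (hR : Pg m (fun w : Fin (k + 1) → M => R (fun i => w i.castSucc) (w (Fin.last k)))) :
    Pg m (fun v => ∃ x, x < f v ∧ R v x) :=
  (hb _ _ (fun v x => ¬ R v x) hf hR).congr fun v => by push Not; rfl

theorem Sg.contract {m : ℕ} (hb : BallCl M m) {k : ℕ} {R : (Fin k → M) → Prop}
    (hR : Sg (m + 1) R) :
    ∃ Q : (Fin (k + 1) → M) → Prop, Pg m Q ∧ ∀ v, R v ↔ ∃ w, Q (Fin.snoc v w) := by
  refine Sg.ind (P := fun k R => ∃ Q : (Fin (k + 1) → M) → Prop, Pg m Q ∧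
    ∀ v, R v ↔ ∃ w, Q (Fin.snoc v w)) ?_ ?_ hR
  · intro k R hR
    refine ⟨fun w => R (fun i => w i.castSucc), hR.subst fun i => IsT.var i.castSucc, fun v => ?_⟩
    simp
  · rintro k R - ⟨Q, hQ, hQR⟩
    refine ⟨fun u => ∃ x, x < u (Fin.last k) ∧ ∃ w, w < u (Fin.last k) ∧
      Q (Fin.snoc (Fin.snoc (fun i : Fin k => u i.castSucc) x : Fin (k + 1) → M) w), ?_, ?_⟩
    · refine hb.bex (R := fun u x => ∃ w, w < u (Fin.last k) ∧
        Q (Fin.snoc (Fin.snoc (fun i : Fin k => u i.castSucc) x : Fin (k + 1) → M) w))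
        (IsT.var _) ?_
      refine hb.bex (R := fun u w => 
        Q (Fin.snoc (Fin.snoc (fun i : Fin k => u i.castSucc.castSucc) (u (Fin.last _)) : Fin (k + 1) → M) w))
        (IsT.var _) ?_
      exact hQ.comp (IsTs.snoc (IsTs.snoc (fun _ => IsT.var _) (IsT.var _)) (IsT.var _))
    · intro v
      simp only [hQR, Fin.snoc_last, Fin.snoc_castSucc]
      constructor
      · rintro ⟨x, w, hw⟩
        exact ⟨max x w + 1, x, lt_succ.2 (le_max_left _ _), w, lt_succ.2 (le_max_right _ _), hw⟩
      · rintro ⟨u, x, -, w, -, hw⟩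
        exact ⟨x, w, hw⟩

theorem ISig.ind {m : ℕ} (hI : ISig m M) {P : M → Prop} (hP : Sg m (fun v : Fin 1 → M => P (v 0)))
    (h0 : P 0) (hs : ∀ x, P x → P (x + 1)) (x : M) : P x :=
  hI {x | P x} (sg_iff_isSigmaDef.1 hP) h0 hs x

theorem ISig.mono {m n : ℕ} (hI : ISig n M) (hm : m ≤ n) : ISig m M := by
  intro A hA
  exact hI A (sg_iff_isSigmaDef.1 ((sg_iff_isSigmaDef.2 hA).mono hm))

theorem ballCl {n : ℕ} (hI : ISig n M) : ∀ m, m ≤ n → BallCl M m := by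
  intro m
  induction m with
  | zero => exact fun _ k f R hf hR => Sg.ofDz (Dz.ball hf (Dz.ofSg hR))
  | succ m ih =>
    intro hm k f R hf hR
    have hb := ih (by omega)
    obtain ⟨Q, hQ, hQR⟩ := hR.contract hb
    have hQR' : ∀ v x, R v x ↔ ∃ w, Q (Fin.snoc (Fin.snoc v x : Fin (k + 1) → M) w) := by
      intro v x
      rw [← hQR]; simp
    have key : ∀ v, (∀ x, x < f v → R v x) ↔ ∃ b, ∀ x, x < f v → ∃ w, w < b ∧
        Q (Fin.snoc (Fin.snoc v x : Fin (k + 1) → M) w) := by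
      intro v
      constructor
      · intro hv
        have := ISig.ind (hI.mono hm) (P := fun a => ∃ b, ∀ x, x < a → x < f v → ∃ w, w < b ∧
          Q (Fin.snoc (Fin.snoc v x : Fin (k + 1) → M) w)) ?_ ?_ ?_ (f v)
        · obtain ⟨b, hb⟩ := this
          exact ⟨b, fun x hx => hb x hx hx⟩
        · refine Sg.ex (R := fun u b => ∀ x, x < u 0 → x < f v → ∃ w, w < b ∧
            Q (Fin.snoc (Fin.snoc v x : Fin (k + 1) → M) w)) (Sg.ofPg ?_)
          refine Pg.ball (R := fun u x => x < f v → ∃ w, w < u (Fin.last _) ∧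
            Q (Fin.snoc (Fin.snoc v x : Fin (k + 1) → M) w)) (IsT.var _) ?_
          refine Pg.imp (Sg.ofDz (Dz.lt (IsT.var _) (IsT.const _))) ?_
          refine hb.bex (R := fun u w =>
            Q (Fin.snoc (Fin.snoc v (u (Fin.last _)) : Fin (k + 1) → M) w)) (IsT.var _) ?_
          exact hQ.comp (((IsTs.const v).snoc (IsT.var _)).snoc (IsT.var _))
        · exact ⟨0, fun x hx => absurd hx (not_lt_z)⟩
        · rintro a ⟨b, hb⟩
          by_cases ha : a < f v
          · obtain ⟨w, hw⟩ := (hQR' v a).1 (hv a ha)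
            refine ⟨max b (w + 1), fun x hx hx' => ?_⟩
            rcases (lt_succ.1 hx).lt_or_eq with hx | rfl
            · obtain ⟨w', h1, h2⟩ := hb x hx hx'
              exact ⟨w', lt_max_of_lt_left h1, h2⟩
            · exact ⟨w, lt_max_of_lt_right (lt_succ.2 le_rfl), hw⟩
          · refine ⟨b, fun x hx hx' => ?_⟩
            rcases (lt_succ.1 hx).lt_or_eq with hx | rfl
            · exact hb x hx hx'
            · exact absurd hx' ha
      · rintro ⟨b, hb⟩ x hx
        obtain ⟨w, -, hw⟩ := hb x hx
        exact (hQR' v x).2 ⟨w, hw⟩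
    refine Sg.congr ?_ key
    refine Sg.ex (R := fun v b => ∀ x, x < f v → ∃ w, w < b ∧
        Q (Fin.snoc (Fin.snoc v x : Fin (k + 1) → M) w)) (Sg.ofPg ?_)
    refine Pg.ball (R := fun v x => ∃ w, w < v (Fin.last _) ∧
        Q (Fin.snoc (Fin.snoc (fun i => v i.castSucc) x : Fin (k + 1) → M) w)) hf.weak ?_
    refine hb.bex (R := fun v w =>
        Q (Fin.snoc (Fin.snoc (fun i => v i.castSucc.castSucc) (v (Fin.last _)) : Fin (k + 1) → M) w)) (IsT.var _) ?_
    exact hQ.comp (IsTs.snoc (IsTs.snoc (fun _ => IsT.var _) (IsT.var _)) (IsT.var _))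

end Clos
end ArithFC

open FirstOrder Language
set_option linter.all false
namespace ArithFC

attribute [local irreducible] Sg Pg Dz IsT

section Rel
variable {M : Type} [lang.Structure M] [h : Fact (PAm M)]

theorem Dz.rel1 {k : ℕ} {R : M → Prop} (hR : Dz (fun v : Fin 1 → M => R (v 0)))
    {f : (Fin k → M) → M} (hf : IsT f) : Dz (fun v => R (f v)) :=
  hR.subst (f := ![f]) (by intro i; fin_cases i; exact hf)
theorem Sg.rel1 {m k : ℕ} {R : M → Prop} (hR : Sg m (fun v : Fin 1 → M => R (v 0)))
    {f : (Fin k → M) → M} (hf : IsT f) : Sg m (fun v => R (f v)) :=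
  hR.subst (f := ![f]) (by intro i; fin_cases i; exact hf)
theorem Pg.rel1 {m k : ℕ} {R : M → Prop} (hR : Pg m (fun v : Fin 1 → M => R (v 0)))
    {f : (Fin k → M) → M} (hf : IsT f) : Pg m (fun v => R (f v)) :=
  hR.subst (f := ![f]) (by intro i; fin_cases i; exact hf)
theorem Dz.rel2 {k : ℕ} {R : M → M → Prop} (hR : Dz (fun v : Fin 2 → M => R (v 0) (v 1)))
    {f g : (Fin k → M) → M} (hf : IsT f) (hg : IsT g) : Dz (fun v => R (f v) (g v)) :=
  hR.subst (f := ![f, g]) (by intro i; fin_cases i; exacts [hf, hg])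
theorem Sg.rel2 {m k : ℕ} {R : M → M → Prop} (hR : Sg m (fun v : Fin 2 → M => R (v 0) (v 1)))
    {f g : (Fin k → M) → M} (hf : IsT f) (hg : IsT g) : Sg m (fun v => R (f v) (g v)) :=
  hR.subst (f := ![f, g]) (by intro i; fin_cases i; exacts [hf, hg])
theorem Pg.rel2 {m k : ℕ} {R : M → M → Prop} (hR : Pg m (fun v : Fin 2 → M => R (v 0) (v 1)))
    {f g : (Fin k → M) → M} (hf : IsT f) (hg : IsT g) : Pg m (fun v => R (f v) (g v)) :=
  hR.subst (f := ![f, g]) (by intro i; fin_cases i; exacts [hf, hg])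
theorem Dz.rel3 {k : ℕ} {R : M → M → M → Prop}
    (hR : Dz (fun v : Fin 3 → M => R (v 0) (v 1) (v 2)))
    {f g e : (Fin k → M) → M} (hf : IsT f) (hg : IsT g) (he : IsT e) :
    Dz (fun v => R (f v) (g v) (e v)) :=
  hR.subst (f := ![f, g, e]) (by intro i; fin_cases i; exacts [hf, hg, he])
theorem Sg.rel3 {m k : ℕ} {R : M → M → M → Prop}
    (hR : Sg m (fun v : Fin 3 → M => R (v 0) (v 1) (v 2)))
    {f g e : (Fin k → M) → M} (hf : IsT f) (hg : IsT g) (he : IsT e) :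
    Sg m (fun v => R (f v) (g v) (e v)) :=
  hR.subst (f := ![f, g, e]) (by intro i; fin_cases i; exacts [hf, hg, he])
theorem Pg.rel3 {m k : ℕ} {R : M → M → M → Prop}
    (hR : Pg m (fun v : Fin 3 → M => R (v 0) (v 1) (v 2)))
    {f g e : (Fin k → M) → M} (hf : IsT f) (hg : IsT g) (he : IsT e) :
    Pg m (fun v => R (f v) (g v) (e v)) :=
  hR.subst (f := ![f, g, e]) (by intro i; fin_cases i; exacts [hf, hg, he])
theorem Dz.rel4 {k : ℕ} {R : M → M → M → M → Prop}
    (hR : Dz (fun v : Fin 4 → M => R (v 0) (v 1) (v 2) (v 3)))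
    {f g e d : (Fin k → M) → M} (hf : IsT f) (hg : IsT g) (he : IsT e) (hd : IsT d) :
    Dz (fun v => R (f v) (g v) (e v) (d v)) :=
  hR.subst (f := ![f, g, e, d]) (by intro i; fin_cases i; exacts [hf, hg, he, hd])

theorem IsT.zero {k : ℕ} : IsT (fun _ : Fin k → M => (0 : M)) := IsT.const _
theorem IsT.one {k : ℕ} : IsT (fun _ : Fin k → M => (1 : M)) := IsT.const _

theorem Dz.ballle {k : ℕ} {f : (Fin k → M) → M} {R : (Fin k → M) → M → Prop} (hf : IsT f)
    (hR : Dz (fun w : Fin (k + 1) → M => R (fun i => w i.castSucc) (w (Fin.last k)))) :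
    Dz (fun v => ∀ x, x ≤ f v → R v x) :=
  (Dz.ball (hf.add IsT.one) hR).congr fun v => by simp only [lt_succ]
theorem Dz.bexle {k : ℕ} {f : (Fin k → M) → M} {R : (Fin k → M) → M → Prop} (hf : IsT f)
    (hR : Dz (fun w : Fin (k + 1) → M => R (fun i => w i.castSucc) (w (Fin.last k)))) :
    Dz (fun v => ∃ x, x ≤ f v ∧ R v x) :=
  (Dz.bex (hf.add IsT.one) hR).congr fun v => by simp only [lt_succ]

example (a : M) : Dz (fun v : Fin 2 → M => ∀ x, x ≤ v 0 + a → ∃ y, y < v 1 * 0 ∧ (y + x ≤ x * v 0 ∨ ¬ (y = 1))) := by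
  apply_rules [Dz.and, Dz.or, Dz.lt, Dz.le, Dz.eq, Dz.not, Dz.imp, Dz.iff, Dz.ball, Dz.bex, Dz.ballle, Dz.bexle, IsT.var, IsT.const, IsT.add, IsT.mul]

end Rel
end ArithFC

open FirstOrder Language
set_option linter.all false
namespace ArithFC

section NT
attribute [local irreducible] Sg Pg Dz IsT
variable {M : Type} [lang.Structure M] [h : Fact (PAm M)]

theorem ISig.indP {m : ℕ} (hI : ISig m M) {P : M → Prop}
    (hP : Pg m (fun v : Fin 1 → M => P (v 0)))
    (h0 : P 0) (hs : ∀ x, P x → P (x + 1)) (a : M) : P a := by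
  by_contra ha
  have key := ISig.ind hI (P := fun x => ∃ z, z < a + 1 ∧ (x ≤ a → z + x = a ∧ ¬ P z)) ?_ ?_ ?_ a
  · obtain ⟨z, -, hz⟩ := key
    obtain ⟨hz, hz'⟩ := hz le_rfl
    have : z = 0 := by
      have : z + a = 0 + a := by rw [hz, zero_add]
      exact add_right_cancel this
    subst this
    exact hz' h0
  · refine Sg.bex (IsT.const _) (Sg.imp (Pg.ofDz ?_) (Sg.and (Sg.ofDz ?_) (Pg.not (hP.rel1 ?_))))
    · apply_rules [Dz.le, IsT.var, IsT.const]
    · apply_rules [Dz.eq, IsT.var, IsT.const, IsT.add]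
    · apply IsT.var
  · exact ⟨a, lt_succ.2 le_rfl, fun _ => ⟨add_zero _, ha⟩⟩
  · rintro x ⟨z, hz, hz'⟩
    by_cases hx : x + 1 ≤ a
    · obtain ⟨e, e'⟩ := hz' ((lt_succ.2 le_rfl).le.trans hx)
      rcases zero_or_succ z with rfl | ⟨z', rfl⟩
      · exact absurd hx (by rw [← e]; simp)
      · refine ⟨z', lt_trans (lt_succ.2 le_rfl) hz, fun _ => ⟨by rw [← e]; ring, fun hp => e' (hs _ hp)⟩⟩
    · exact ⟨0, by simp, fun hx' => absurd hx' hx⟩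

theorem ISig.lnpP {m : ℕ} (hI : ISig m M) {P : M → Prop}
    (hP : Pg m (fun v : Fin 1 → M => P (v 0))) {a : M} (ha : P a) :
    ∃ x, P x ∧ x ≤ a ∧ ∀ y, y < x → ¬ P y := by
  by_contra hc
  push Not at hc
  have : ∀ x, ∀ y, y < x → ¬ P y := by
    refine ISig.ind hI (P := fun x => ∀ y, y < x → ¬ P y) ?_ ?_ ?_
    · refine ballCl hI m le_rfl _ _ (fun v x => ¬ P x) (IsT.var _) (Pg.not (hP.rel1 (IsT.var _)))
    · exact fun y hy => absurd hy not_lt_z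
    · intro x hx y hy
      rcases (lt_succ.1 hy).lt_or_eq with hy | rfl
      · exact hx y hy
      · intro hp
        by_cases hya : y ≤ a
        · obtain ⟨z, hz, hz'⟩ := hc y hp hya
          exact hx z hz hz'
        · exact hx a (not_le.1 hya) ha
  exact this (a + 1) a (lt_succ.2 le_rfl) ha

theorem ISig.lnpS {m : ℕ} (hI : ISig m M) {P : M → Prop}
    (hP : Sg m (fun v : Fin 1 → M => P (v 0))) {a : M} (ha : P a) :
    ∃ x, P x ∧ x ≤ a ∧ ∀ y, y < x → ¬ P y := by
  by_contra hc
  push Not at hc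
  have : ∀ x, ∀ y, y < x → ¬ P y := by
    refine ISig.indP hI (P := fun x => ∀ y, y < x → ¬ P y) ?_ ?_ ?_
    · refine Pg.ball (R := fun v x => ¬ P x) (IsT.var _) (Sg.not (hP.rel1 (IsT.var _)))
    · exact fun y hy => absurd hy not_lt_z
    · intro x hx y hy
      rcases (lt_succ.1 hy).lt_or_eq with hy | rfl
      · exact hx y hy
      · intro hp
        by_cases hya : y ≤ a
        · obtain ⟨z, hz, hz'⟩ := hc y hp hya
          exact hx z hz hz'
        · exact hx a (not_le.1 hya) ha
  exact this (a + 1) a (lt_succ.2 le_rfl) ha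

theorem Dz.dvd {k : ℕ} {f g : (Fin k → M) → M} (hf : IsT f) (hg : IsT g) :
    Dz (fun v => f v ∣ g v) := by
  refine Dz.congr (R' := fun v => ∃ c, c ≤ g v ∧ g v = f v * c) ?_ fun v => ?_
  · exact Dz.bexle hg (Dz.eq hg.weak (hf.weak.mul (IsT.var _)))
  · constructor
    · rintro ⟨c, hc⟩
      by_cases h0 : g v = 0
      · exact ⟨0, by simp, by simp [h0]⟩
      · refine ⟨c, ?_, hc⟩
        rw [hc]
        refine le_mul_of_one_le_left (by simp) ?_
        rw [← zero_add (1 : M), succ_le]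
        exact pos_of_ne_zero (fun h => h0 (by rw [hc, h, zero_mul]))
    · rintro ⟨c, -, hc⟩
      exact ⟨c, hc⟩

/-- Membership in the coded set. -/
def Memb (a b z : M) : Prop := (z + 1) * b + 1 ∣ a

theorem Dz.memb {k : ℕ} {f g e : (Fin k → M) → M} (hf : IsT f) (hg : IsT g) (he : IsT e) :
    Dz (fun v => Memb (f v) (g v) (e v)) :=
  Dz.dvd (((he.add IsT.one).mul hg).add IsT.one) hf

theorem dvd_canc {m x y : M} (hm : 0 < m) (h1 : m ∣ x + y) (h2 : m ∣ x) : m ∣ y := by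
  obtain ⟨p, rfl⟩ := h2
  obtain ⟨q, hq⟩ := h1
  rcases le_or_gt p q with hpq | hpq
  · obtain ⟨t, rfl⟩ := exists_add_of_le hpq
    refine ⟨t, add_left_cancel (a := m * p) ?_⟩
    rw [hq]; ring
  · exfalso
    have h1 : m * q < m * p := (mul_lt_mul_iff_right₀ hm).2 hpq
    have h2 : m * p ≤ m * q := by rw [← hq]; simp
    exact absurd h2 (not_le.2 h1)

/-- `b` is a positive common multiple of `1..y`. -/
def CM (b y : M) : Prop := 0 < b ∧ ∀ i, 0 < i → i ≤ y → i ∣ b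

theorem coprime_lem {b y i j c : M} (hb : CM b y) (hi : i < y) (hj : j < y) (hij : i ≠ j)
    (hd : (j + 1) * b + 1 ∣ ((i + 1) * b + 1) * c) : (j + 1) * b + 1 ∣ c := by
  have main : ∀ d, 0 < d → d ≤ y → (j + 1) * b + 1 ∣ d * c → (j + 1) * b + 1 ∣ c := by
    intro d hd0 hdy hdc
    obtain ⟨e, he⟩ := hb.2 d hd0 hdy
    have h1 : (j + 1) * b + 1 ∣ (j + 1) * b * c := by
      have : (j + 1) * b * c = d * c * ((j + 1) * e) := by rw [he]; ring
      rw [this]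
      exact Dvd.dvd.mul_right hdc _
    refine dvd_canc (by simp) (x := (j + 1) * b * c) ?_ h1
    exact ⟨c, by ring⟩
  rcases lt_or_gt_of_ne hij with hij | hij
  · obtain ⟨d, rfl⟩ := lt_exists.1 hij
    refine main (d + 1) (by simp) ?_ ?_
    · refine le_trans ?_ hj.le
      rw [add_assoc]; simp
    · refine dvd_canc (by simp) (x := (i + 1) * ((i + d + 1 + 1) * b + 1) * c) ?_
        ⟨(i + 1) * c, by ring⟩
      have := Dvd.dvd.mul_left hd (i + d + 1 + 1)
      convert this using 1
      ring
  · obtain ⟨d, rfl⟩ := lt_exists.1 hij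
    refine main (d + 1) (by simp) ?_ ?_
    · refine le_trans ?_ hi.le
      rw [add_assoc]; simp
    · refine dvd_canc (by simp) (x := (j + 1) * (((j + d + 1 + 1) * b + 1) * c)) ?_
        (Dvd.dvd.mul_left hd _)
      refine ⟨(j + d + 1 + 1) * c, by ring⟩

variable [h1 : Fact (ISig 1 M)]

theorem ind0 {P : M → Prop} (hP : Dz (fun v : Fin 1 → M => P (v 0)))
    (h0 : P 0) (hs : ∀ x, P x → P (x + 1)) (a : M) : P a :=
  h1.out.ind (Sg.ofDz hP) h0 hs a
theorem lnp0 {P : M → Prop} (hP : Dz (fun v : Fin 1 → M => P (v 0))) {a : M} (ha : P a) :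
    ∃ x, P x ∧ x ≤ a ∧ ∀ y, y < x → ¬ P y :=
  h1.out.lnpS (Sg.ofDz hP) ha

theorem exists_cm (y : M) : ∃ b, CM b y := by
  refine h1.out.ind (P := fun y => ∃ b, CM b y) ?_ ?_ ?_ y
  · refine Sg.ex (R := fun v b => CM b (v 0)) (Sg.ofDz ?_)
    unfold CM
    refine Dz.and (Dz.lt (IsT.const _) (IsT.var _)) ?_
    refine (Dz.ballle (f := fun v => v 0) (R := fun v i => 0 < i → i ∣ v 1) (IsT.var _) ?_).congr
      (R := fun w : Fin 2 → M => ∀ i, 0 < i → i ≤ w 0 → i ∣ w 1)  (fun v => ⟨fun h x a b => h x b a, fun h x a b => h x b a⟩)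
    apply_rules [Dz.imp, Dz.lt, IsT.const, IsT.var, Dz.dvd]
  · exact ⟨1, by simp, fun i hi hi' => absurd hi (not_lt.2 hi')⟩
  · rintro y ⟨b, hb, hb'⟩
    refine ⟨b * (y + 1), mul_pos hb (by simp), fun i hi hi' => ?_⟩
    rcases hi'.lt_or_eq with hi' | rfl
    · exact Dvd.dvd.mul_right (hb' i hi (lt_succ.1 hi')) _
    · simp

theorem exists_full (b y : M) : ∃ A, 0 < A ∧ ∀ z, z < y → Memb A b z := by
  refine h1.out.ind (P := fun y => ∃ A, 0 < A ∧ ∀ z, z < y → Memb A b z) ?_ ?_ ?_ y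
  · refine Sg.ex (R := fun v A => 0 < A ∧ ∀ z, z < v 0 → Memb A b z) (Sg.ofDz ?_)
    apply_rules [Dz.and, Dz.imp, Dz.lt, IsT.const, IsT.var, Dz.memb, Dz.ball]
  · exact ⟨1, by simp, fun i hi => absurd hi not_lt_z⟩
  · rintro y ⟨A, hA, hA'⟩
    refine ⟨A * ((y + 1) * b + 1), mul_pos hA (by simp), fun i hi => ?_⟩
    rcases (lt_succ.1 hi).lt_or_eq with hi' | rfl
    · exact Dvd.dvd.mul_right (hA' i hi') _
    · exact Dvd.dvd.mul_left dvd_rfl _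

theorem compS {n : ℕ} (hI : ISig n M) {X : M → Prop} (hX : Sg n (fun v : Fin 1 → M => X (v 0)))
    {b y A : M} (hb : CM b y) (hA : 0 < A) (hA' : ∀ z, z < y → Memb A b z) :
    ∃ a, 0 < a ∧ a ≤ A ∧ ∀ z, z < y → (Memb a b z ↔ X z) := by
  have hP : Pg n (fun v : Fin 1 → M => 0 < v 0 ∧ ∀ z, z < y → X z → Memb (v 0) b z) := by
    refine Pg.and (Pg.ofDz (Dz.lt (IsT.const _) (IsT.var _))) ?_
    refine Pg.ball (R := fun v z => X z → Memb (v 0) b z) (IsT.const _) ?_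
    refine Pg.imp (hX.rel1 (IsT.var _)) (Pg.ofDz (Dz.memb (IsT.var _) (IsT.const _) (IsT.var _)))
  obtain ⟨a, ⟨ha, ha'⟩, haA, hl⟩ := hI.lnpP (P := fun a => 0 < a ∧ ∀ z, z < y → X z → Memb a b z)
    (a := A) hP ⟨hA, fun z hz _ => hA' z hz⟩
  · refine ⟨a, ha, haA, fun z hz => ⟨fun hm => ?_, ha' z hz⟩⟩
    by_contra hXz
    obtain ⟨c, hc⟩ := hm
    have hc0 : 0 < c := by
      refine pos_of_ne_zero fun h0 => ?_
      rw [h0, mul_zero] at hc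
      exact ha.ne' hc
    refine hl c ?_ ⟨hc0, fun w hw hXw => ?_⟩
    · rw [hc]
      refine lt_mul_of_one_lt_left hc0 ?_
      have : 0 < (z + 1) * b := mul_pos (by simp) hb.1
      simpa using this
    · refine coprime_lem (i := z) (j := w) hb hz hw ?_ ?_
      · rintro rfl; exact hXz hXw
      · rw [← hc]
        exact ha' w hw hXw

theorem compP {n : ℕ} (hI : ISig n M) {X : M → Prop} (hX : Pg n (fun v : Fin 1 → M => X (v 0)))
    {b y A : M} (hb : CM b y) (hA : 0 < A) (hA' : ∀ z, z < y → Memb A b z) :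
    ∃ a, 0 < a ∧ a ≤ A ∧ ∀ z, z < y → (Memb a b z ↔ X z) := by
  obtain ⟨a', -, -, ha'⟩ := compS hI (X := fun z => ¬ X z) hX.not hb hA hA'
  obtain ⟨a, h1, h2, h3⟩ := compS hI (X := fun z => ¬ Memb a' b z)
    (Sg.ofDz (Dz.not (Dz.memb (IsT.const _) (IsT.const _) (IsT.var _)))) hb hA hA'
  refine ⟨a, h1, h2, fun z hz => ?_⟩
  rw [h3 z hz, ha' z hz, not_not]

theorem comp0 {X : M → Prop} (hX : Dz (fun v : Fin 1 → M => X (v 0)))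
    {b y A : M} (hb : CM b y) (hA : 0 < A) (hA' : ∀ z, z < y → Memb A b z) :
    ∃ a, 0 < a ∧ a ≤ A ∧ ∀ z, z < y → (Memb a b z ↔ X z) :=
  compS h1.out (Sg.ofDz hX) hb hA hA'


theorem even_lem (x : M) : ∃ k, x * (x + 1) = k + k := by
  refine h1.out.ind (P := fun x => ∃ k, x * (x + 1) = k + k) ?_ ?_ ?_ x
  · refine Sg.ex (R := fun v k => v 0 * (v 0 + 1) = k + k) (Sg.ofDz ?_)
    apply_rules [Dz.eq, IsT.const, IsT.var, IsT.add, IsT.mul]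
  · exact ⟨0, by simp⟩
  · rintro x ⟨k, hk⟩
    refine ⟨k + x + 1, ?_⟩
    calc (x + 1) * (x + 1 + 1) = x * (x + 1) + (x + x + 1 + 1) := by ring
      _ = _ := by rw [hk]; ring

theorem pair_ex (x y : M) : ∃ z, IsPairC z x y := by
  obtain ⟨k, hk⟩ := even_lem (x + y)
  refine ⟨k + y, ?_⟩
  unfold IsPairC
  rw [hk]; ring

theorem pair_inj {z x y x' y' : M} (h1 : IsPairC z x y) (h2 : IsPairC z x' y') :
    x = x' ∧ y = y' := by
  have key : ∀ x y x' y' : M, IsPairC z x y → IsPairC z x' y' → ¬ (x + y < x' + y') := by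
    intro x y x' y' h1 h2 hlt
    unfold IsPairC at h1 h2
    obtain ⟨d, hd⟩ := lt_exists.1 hlt
    rw [h1, hd] at h2
    have : (x + y) * (x + y + 1) + (y + y) < (x + y + d + 1) * (x + y + d + 1 + 1) + (y' + y') := by
      have e : (x + y + d + 1) * (x + y + d + 1 + 1) + (y' + y') = 
        (x + y) * (x + y + 1) + (y + y) + ((x + x + (x + y) * (d + d) + d * d + d + d + d + (y' + y') + 1) + 1) := by ring
      rw [e]
      refine lt_add_of_pos_right _ ?_
      simp
    exact this.ne h2
  have hs : x + y = x' + y' :=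
    le_antisymm (not_lt.1 (key _ _ _ _ h2 h1)) (not_lt.1 (key _ _ _ _ h1 h2))
  unfold IsPairC at h1 h2
  rw [h1, hs] at h2
  have h3 := add_left_cancel h2
  have h4 : y = y' := by
    rcases lt_trichotomy y y' with h | h | h
    · exact absurd h3 (add_lt_add h h).ne
    · exact h
    · exact absurd h3 (add_lt_add h h).ne'
  subst h4
  exact ⟨add_right_cancel hs, rfl⟩

theorem dbl_le {x z : M} (h : x + x ≤ z + z) : x ≤ z := by
  by_contra hc
  exact absurd h (not_le.2 (add_lt_add (not_le.1 hc) (not_le.1 hc)))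

theorem pair_le {z x y : M} (h1 : IsPairC z x y) : x ≤ z ∧ y ≤ z := by
  unfold IsPairC at h1
  constructor
  · refine dbl_le ?_
    rw [h1]
    rcases zero_or_succ x with rfl | ⟨d, rfl⟩
    · simp
    · have e : (d + 1 + y) * (d + 1 + y + 1) + (y + y) =
        (d + 1 + (d + 1)) + (d * d + d + d * y + y * d + y * y + y + y + y + y + y) := by ring
      rw [e]; simp
  · refine dbl_le ?_
    rw [h1]; simp

theorem beta_inj {a b i x x' : M} (h1 : BetaC a b i x) (h2 : BetaC a b i x') : x = x' := by
  obtain ⟨h1, q, hq⟩ := h1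
  obtain ⟨h2, q', hq'⟩ := h2
  generalize (i + 1) * b + 1 = m at *
  have key : ∀ q x q' x' : M, a = q * m + x → a = q' * m + x' → x < m → ¬ q < q' := by
    intro q x q' x' h1 h2 hx hlt
    obtain ⟨d, rfl⟩ := lt_exists.1 hlt
    have : q * m + x < (q + d + 1) * m + x' := by
      have e : (q + d + 1) * m + x' = q * m + m + (d * m + x') := by ring
      rw [e]
      refine lt_of_lt_of_le (by gcongr) (le_add_of_nonneg_right (by simp))
    rw [← h1, ← h2] at this
    exact lt_irrefl _ this
  have : q = q' := le_antisymm (not_lt.1 (key _ _ _ _ hq' hq h2)) (not_lt.1 (key _ _ _ _ hq hq' h1))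
  subst this
  exact add_left_cancel (hq.symm.trans hq')

theorem seq_inj {s i x x' : M} (h1 : SeqAt s i x) (h2 : SeqAt s i x') : x = x' := by
  obtain ⟨a, b, h1, h1'⟩ := h1
  obtain ⟨a', b', h2, h2'⟩ := h2
  obtain ⟨rfl, rfl⟩ := pair_inj h1 h2
  exact beta_inj h1' h2'

theorem Dz.beta {k : ℕ} {f g e d : (Fin k → M) → M} (hf : IsT f) (hg : IsT g) (he : IsT e)
    (hd : IsT d) : Dz (fun v => BetaC (f v) (g v) (e v) (d v)) := by
  refine Dz.rel4 (R := fun a b i x => BetaC a b i x) ?_ hf hg he hd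
  refine Dz.congr (R' := fun v => v 3 < (v 2 + 1) * v 1 + 1 ∧ ∃ q, q ≤ v 0 ∧
    v 0 = q * ((v 2 + 1) * v 1 + 1) + v 3) ?_ fun v => ?_
  · apply_rules [Dz.and, Dz.lt, Dz.eq, IsT.const, IsT.var, IsT.add, IsT.mul, Dz.bexle]
  · unfold BetaC
    constructor
    · rintro ⟨h1, q, hq⟩
      refine ⟨h1, q, ?_, hq⟩
      rw [hq]
      have e : q * ((v 2 + 1) * v 1 + 1) + v 3 = q + (q * ((v 2 + 1) * v 1) + v 3) := by ring
      rw [e]; simp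
    · rintro ⟨h1, q, -, hq⟩
      exact ⟨h1, q, hq⟩

theorem Dz.pair {k : ℕ} {f g e : (Fin k → M) → M} (hf : IsT f) (hg : IsT g) (he : IsT e) :
    Dz (fun v => IsPairC (f v) (g v) (e v)) := by
  unfold IsPairC
  apply_rules [Dz.eq, IsT.const, IsT.add, IsT.mul]

theorem Dz.seq {k : ℕ} {f g e : (Fin k → M) → M} (hf : IsT f) (hg : IsT g) (he : IsT e) :
    Dz (fun v => SeqAt (f v) (g v) (e v)) := by
  refine Dz.rel3 (R := fun a b i => SeqAt a b i) ?_ hf hg he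
  refine Dz.congr (R' := fun v => ∃ a, a ≤ v 0 ∧ ∃ b, b ≤ v 0 ∧ (IsPairC (v 0) a b ∧
    BetaC a b (v 1) (v 2))) ?_ fun v => ?_
  · apply_rules [Dz.pair, Dz.beta, Dz.and, IsT.const, IsT.var, IsT.add, IsT.mul, Dz.bexle]
  · unfold SeqAt
    constructor
    · rintro ⟨a, b, h1, h2⟩
      exact ⟨a, (pair_le h1).1, b, (pair_le h1).2, h1, h2⟩
    · rintro ⟨a, -, b, -, h1, h2⟩
      exact ⟨a, b, h1, h2⟩

end NT
end ArithFC

open FirstOrder Language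
set_option linter.all false
namespace ArithFC

section Unif
attribute [local irreducible] Sg Pg Dz IsT
variable {M : Type} [lang.Structure M] [h : Fact (PAm M)]

theorem Sg.contract2 {n : ℕ} (hI : ISig n M) {R : M → M → Prop}
    (hR : Sg (n + 1) (fun v : Fin 2 → M => R (v 0) (v 1))) :
    ∃ θ : M → M → M → Prop, Pg n (fun v : Fin 3 → M => θ (v 0) (v 1) (v 2)) ∧
      ∀ x y, R x y ↔ ∃ w, θ x y w := by
  obtain ⟨Q, hQ, hQR⟩ := hR.contract (ballCl hI n le_rfl)
  refine ⟨fun a b c => Q ![a, b, c], ?_, fun x y => ?_⟩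
  · refine hQ.comp ?_
    intro i
    fin_cases i <;> apply IsT.var
  · have := hQR ![x, y]
    simp only [Matrix.cons_val_zero, Matrix.cons_val_one] at this
    rw [this]
    have : ∀ w, (Fin.snoc ![x, y] w : Fin 3 → M) = ![x, y, w] := by
      intro w; funext i; fin_cases i <;> rfl
    simp only [this]

theorem uniformize {n : ℕ} (hI : ISig n M) {R : M → M → Prop}
    (hR : Sg (n + 1) (fun v : Fin 2 → M => R (v 0) (v 1))) :
    ∃ R' : M → M → Prop, Sg (n + 1) (fun v : Fin 2 → M => R' (v 0) (v 1)) ∧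
      (∀ x y, R' x y → R x y) ∧ (∀ x y y', R' x y → R' x y' → y = y') ∧
      (∀ x y, R x y → ∃ y, R' x y) := by
  obtain ⟨θ, hθ, hRθ⟩ := hR.contract2 hI
  have hb := ballCl hI n le_rfl
  refine ⟨fun u v => ∃ m, v < m ∧ (∃ w, w < m ∧ θ u v w) ∧ (∀ v', v' < v → ∀ w, w < m → ¬ θ u v' w)
    ∧ ∀ m', m' < m → ∀ v', v' < m' → ∀ w, w < m' → ¬ θ u v' w, ?_, ?_, ?_, ?_⟩
  · apply Sg.ex
    apply Sg.and
    · exact Sg.ofDz (Dz.lt (IsT.var _) (IsT.var _))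
    apply Sg.and
    · apply Sg.ofPg
      apply hb.bex (IsT.var _)
      exact hθ.rel3 (IsT.var _) (IsT.var _) (IsT.var _)
    apply Sg.and
    · apply Sg.mono1
      apply hb _ _ _ (IsT.var _)
      apply hb _ _ _ (IsT.var _)
      exact Pg.not (hθ.rel3 (IsT.var _) (IsT.var _) (IsT.var _))
    · apply Sg.mono1
      apply hb _ _ _ (IsT.var _)
      apply hb _ _ _ (IsT.var _)
      apply hb _ _ _ (IsT.var _)
      exact Pg.not (hθ.rel3 (IsT.var _) (IsT.var _) (IsT.var _))
  · rintro x y ⟨m, -, ⟨w, -, hw⟩, -⟩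
    exact (hRθ x y).2 ⟨w, hw⟩
  · rintro x y y' ⟨m, hm, ⟨w, hwm, hw⟩, h1, h2⟩ ⟨m', hm', ⟨w', hwm', hw'⟩, h1', h2'⟩
    have : m = m' := by
      rcases lt_trichotomy m m' with hlt | rfl | hlt
      · exact absurd hw (h2' m hlt y hm w hwm)
      · rfl
      · exact absurd hw' (h2 m' hlt y' hm' w' hwm')
    subst this
    rcases lt_trichotomy y y' with hlt | rfl | hlt
    · exact absurd hw (h1' y hlt w hwm)
    · rfl
    · exact absurd hw' (h1 y' hlt w' hwm')
  · intro x y hxy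
    obtain ⟨w, hw⟩ := (hRθ x y).1 hxy
    have hP : Pg n (fun v : Fin 1 → M => ∃ y, y < v 0 ∧ ∃ w, w < v 0 ∧ θ x y w) := by
      apply hb.bex (IsT.var _)
      apply hb.bex (IsT.var _)
      exact hθ.rel3 (IsT.const _) (IsT.var _) (IsT.var _)
    obtain ⟨m, ⟨y1, hy1, w1, hw1, hθ1⟩, -, hml⟩ := hI.lnpP (P := fun m => ∃ y, y < m ∧ ∃ w, w < m ∧ θ x y w) (a := max y w + 1) hP
      ⟨y, lt_succ.2 (le_max_left _ _), w, lt_succ.2 (le_max_right _ _), hw⟩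
    have hP2 : Pg n (fun v : Fin 1 → M => v 0 < m ∧ ∃ w, w < m ∧ θ x (v 0) w) := by
      apply Pg.and
      · exact Pg.ofDz (Dz.lt (IsT.var _) (IsT.const _))
      apply hb.bex (IsT.const _)
      exact hθ.rel3 (IsT.const _) (IsT.var _) (IsT.var _)
    obtain ⟨y2, ⟨hy2, w2, hw2, hθ2⟩, hy21, hyl⟩ := hI.lnpP (P := fun y => y < m ∧ ∃ w, w < m ∧ θ x y w) (a := y1) hP2
      ⟨hy1, w1, hw1, hθ1⟩
    refine ⟨y2, m, hy2, ⟨w2, hw2, hθ2⟩, fun v' hv' w hw hθ => hyl v' hv' ⟨hv'.trans hy2, w, hw, hθ⟩,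
      fun m' hm' v' hv' w hw hθ => hml m' hm' ⟨v', hv', w, hw, hθ⟩⟩

end Unif

section SeqMake
attribute [local irreducible] Sg Pg Dz IsT
variable {M : Type} [lang.Structure M] [h : Fact (PAm M)] [h1 : Fact (ISig 1 M)]

theorem inv_lem {b y i j : M} (hb : CM b y) (hij : i < j) (hj : j < y) :
    ∃ r s, ((i + 1) * b + 1) * r = 1 + ((j + 1) * b + 1) * s := by
  obtain ⟨d, rfl⟩ := lt_exists.1 hij
  obtain ⟨e, he⟩ := hb.2 (d + 1) (by simp) (by
    refine le_trans ?_ hj.le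
    rw [add_assoc]; simp)
  have hpos : 0 < (i + d + 1 + 1) * b := mul_pos (by simp) hb.1
  obtain ⟨γ, hγ⟩ : ∃ γ, (i + d + 1 + 1) * b = γ + 1 := by
    rcases zero_or_succ ((i + d + 1 + 1) * b) with h0 | h0
    · exact absurd h0 hpos.ne'
    · exact h0
  set J := i + d + 1 + 1 with hJ
  have e1 : ((i + 1) * b + 1) * J = (d + 1) + (i + 1) * (J * b + 1) := by
    rw [hJ]; ring
  have e2 : ((i + 1) * b + 1) * (J * J * e) = (γ + 1) + (i + 1) * J * e * (J * b + 1) := by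
    calc ((i + 1) * b + 1) * (J * J * e) = (((i + 1) * b + 1) * J) * (J * e) := by ring
      _ = J * ((d + 1) * e) + (i + 1) * J * e * (J * b + 1) := by rw [e1]; ring
      _ = _ := by rw [← he, hγ]
  refine ⟨J * J * e * (γ + 1), (i + 1) * J * e * (γ + 1) + γ, ?_⟩
  calc ((i + 1) * b + 1) * (J * J * e * (γ + 1)) = (((i + 1) * b + 1) * (J * J * e)) * (γ + 1) := by ring
    _ = _ := by rw [e2, hγ]; ring

theorem unit_lem {b y j : M} (hb : CM b y) (hj : j < y) :
    ∃ P u q, (∀ i, i < j → (i + 1) * b + 1 ∣ P) ∧ P * u = 1 + ((j + 1) * b + 1) * q := by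
  have := h1.out.ind (P := fun k => ∃ P u q, (∀ i, i < k → i < j → (i + 1) * b + 1 ∣ P) ∧
    P * u = 1 + ((j + 1) * b + 1) * q) ?_ ?_ ?_ j
  · obtain ⟨P, u, q, h1, h2⟩ := this
    exact ⟨P, u, q, fun i hi => h1 i hi hi, h2⟩
  · apply Sg.ex
    apply Sg.ex
    apply Sg.ex
    apply Sg.ofDz
    apply_rules (maxDepth := 1000) [Dz.and, Dz.ball, Dz.imp, Dz.eq, Dz.lt, Dz.dvd, IsT.const, IsT.var, IsT.add, IsT.mul]
  · exact ⟨1, 1, 0, fun i hi => absurd hi not_lt_z, by ring⟩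
  · rintro k ⟨P, u, q, hP, hq⟩
    by_cases hk : k < j
    · obtain ⟨r, s, hrs⟩ := inv_lem hb hk hj
      refine ⟨P * ((k + 1) * b + 1), u * r, q + s + ((j + 1) * b + 1) * q * s, fun i hi hij => ?_, ?_⟩
      · rcases (lt_succ.1 hi).lt_or_eq with hi | rfl
        · exact Dvd.dvd.mul_right (hP i hi hij) _
        · exact Dvd.dvd.mul_left dvd_rfl _
      · calc P * ((k + 1) * b + 1) * (u * r) = (P * u) * (((k + 1) * b + 1) * r) := by ring
          _ = _ := by rw [hq, hrs]; ring
    · refine ⟨P, u, q, fun i hi hij => ?_, hq⟩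
      rcases (lt_succ.1 hi).lt_or_eq with hi | rfl
      · exact hP i hi hij
      · exact absurd hij hk

theorem beta_of {a b i v : M} (hv : v < (i + 1) * b + 1) {q : M}
    (hq : a = q * ((i + 1) * b + 1) + v) : BetaC a b i v := ⟨hv, q, hq⟩

theorem seqMake {g : M → M → Prop} (hg : Dz (fun v : Fin 2 → M => g (v 0) (v 1))) (l B : M)
    (hgB : ∀ i, i < l → ∃ v, v < B ∧ g i v) :
    ∃ s, ∀ i, i < l → ∃ v, v < B ∧ (g i v ∧ SeqAt s i v) := by
  obtain ⟨c, hc⟩ := exists_cm l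
  have hb : CM (c * (B + 1)) l :=
    ⟨mul_pos hc.1 (by simp), fun i hi hi' => Dvd.dvd.mul_right (hc.2 i hi hi') _⟩
  have hBb : B ≤ c * (B + 1) := by
    refine le_trans ?_ (le_mul_of_one_le_left (by simp) ?_)
    · simp
    · rw [← zero_add (1 : M), succ_le]; exact hc.1
  generalize c * (B + 1) = b at hb hBb
  have hBm : ∀ i v, v < B → v < (i + 1) * b + 1 := by
    intro i v hv
    refine lt_succ.2 (hv.le.trans (hBb.trans ?_))
    exact le_mul_of_one_le_left (by simp) (by simp)
  have := h1.out.ind (P := fun j => ∃ a, ∀ i, i < j → i < l → ∃ v, v < B ∧ (g i v ∧ BetaC a b i v))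
    ?_ ?_ ?_ l
  · obtain ⟨a, ha⟩ := this
    obtain ⟨s, hs⟩ := pair_ex a b
    refine ⟨s, fun i hi => ?_⟩
    obtain ⟨v, h1, h2, h3⟩ := ha i hi hi
    exact ⟨v, h1, h2, a, b, hs, h3⟩
  · apply Sg.ex
    apply Sg.ofDz
    have hg' : ∀ (k : ℕ) (f e : (Fin k → M) → M), IsT f → IsT e → Dz (fun v => g (f v) (e v)) :=
      fun k f e hf he => hg.rel2 hf he
    apply_rules (maxDepth := 1000) [Dz.beta, hg', Dz.and, Dz.ball, Dz.bex, Dz.imp, Dz.eq, Dz.lt, Dz.dvd, IsT.const, IsT.var, IsT.add, IsT.mul]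
  · exact ⟨0, fun i hi => absurd hi not_lt_z⟩
  · rintro j ⟨a, ha⟩
    by_cases hj : j < l
    · obtain ⟨v, hv, hgv⟩ := hgB j hj
      obtain ⟨P, u, q, hP, hPu⟩ := unit_lem hb hj
      refine ⟨a + P * u * (v + a * ((j + 1) * b)), fun i hi hil => ?_⟩
      rcases (lt_succ.1 hi).lt_or_eq with hi | rfl
      · obtain ⟨v', h1, h2, h3⟩ := ha i hi hil
        refine ⟨v', h1, h2, ?_⟩
        obtain ⟨h3, q', hq'⟩ := h3
        obtain ⟨p, hp⟩ := hP i hi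
        refine beta_of h3 (q := q' + p * u * (v + a * ((j + 1) * b))) ?_
        calc a + P * u * (v + a * ((j + 1) * b)) = (q' * ((i + 1) * b + 1) + v') + P * u * (v + a * ((j + 1) * b)) := by rw [← hq']
          _ = _ := by rw [hp]; ring
      · refine ⟨v, hv, hgv, beta_of (hBm _ _ hv) (q := a + q * (v + a * ((i + 1) * b))) ?_⟩
        rw [hPu]; ring
    · refine ⟨a, fun i hi hil => ?_⟩
      rcases (lt_succ.1 hi).lt_or_eq with hi | rfl
      · exact ha i hi hil
      · exact absurd hil hj

theorem seq_le {s i u : M} (hs : SeqAt s i u) : u ≤ s := by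
  obtain ⟨a, b, h1, -, q, hq⟩ := hs
  refine le_trans ?_ (pair_le h1).1
  rw [hq]; simp

theorem seq_append (s T p : M) (hs : ∀ t, t < T → ∃ u, SeqAt s t u) :
    ∃ s', (∀ t, t < T → ∀ u, SeqAt s' t u ↔ SeqAt s t u) ∧ SeqAt s' T p := by
  obtain ⟨s', hs'⟩ := seqMake (g := fun t u => (t < T ∧ SeqAt s t u) ∨ (t = T ∧ u = p)) (by
    apply_rules (maxDepth := 1000) [Dz.seq, Dz.and, Dz.or, Dz.eq, Dz.lt, IsT.const, IsT.var]) (T + 1) (s + p + 1) (by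
      intro i hi
      rcases (lt_succ.1 hi).lt_or_eq with hi | rfl
      · obtain ⟨u, hu⟩ := hs i hi
        exact ⟨u, lt_succ.2 ((seq_le hu).trans (by simp)), Or.inl ⟨hi, hu⟩⟩
      · exact ⟨p, lt_succ.2 (by simp), Or.inr ⟨rfl, rfl⟩⟩)
  refine ⟨s', fun t ht u => ?_, ?_⟩
  · obtain ⟨v, -, h1, h2⟩ := hs' t (lt_succ.2 ht.le)
    rcases h1 with ⟨-, h1⟩ | ⟨rfl, -⟩
    · constructor
      · intro hu; rwa [seq_inj hu h2]
      · intro hu; rwa [seq_inj hu h1]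
    · exact absurd ht (lt_irrefl _)
  · obtain ⟨v, -, h1, h2⟩ := hs' T (lt_succ.2 le_rfl)
    rcases h1 with ⟨h1, -⟩ | ⟨-, rfl⟩
    · exact absurd h1 (lt_irrefl _)
    · exact h2

theorem enum_lem {X : M → Prop} (hX : Dz (fun v : Fin 1 → M => X (v 0))) (x y : M) :
    (∃ c H, CodesFinset c H x ∧ ∀ z ∈ H, z < y ∧ X z) ∨
      ∃ s, ∀ z, z < y → X z → ∃ r, r < x ∧ SeqAt s r z := by
  have := h1.out.ind (P := fun y => ∃ s l, l ≤ x ∧ (∀ r, r < l → ∃ z, z < y ∧ (X z ∧ SeqAt s r z)) ∧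
    (∀ j, j < l → ∀ i, i < j → ∀ u, u ≤ s → ∀ v, v ≤ s → SeqAt s i u → SeqAt s j v → u < v) ∧
    (l < x → ∀ z, z < y → X z → ∃ r, r < l ∧ SeqAt s r z)) ?_ ?_ ?_ y
  · obtain ⟨s, l, hl, hs1, hs2, hs3⟩ := this
    rcases hl.lt_or_eq with hl | rfl
    · right
      refine ⟨s, fun z hz hXz => ?_⟩
      obtain ⟨r, hr, hr'⟩ := hs3 hl z hz hXz
      exact ⟨r, hr.trans hl, hr'⟩
    · left
      obtain ⟨c, hc⟩ := pair_ex l s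
      refine ⟨c, {z | ∃ r, r < l ∧ SeqAt s r z}, ⟨s, hc, ?_, ?_, ?_⟩, ?_⟩
      · intro i hi
        obtain ⟨z, -, -, hz⟩ := hs1 i hi
        exact ⟨z, ⟨i, hi, hz⟩, hz⟩
      · intro i j u v hij hj hu hv
        exact hs2 j hj i hij u (seq_le hu) v (seq_le hv) hu hv
      · intro z; rfl
      · rintro z ⟨r, hr, hz⟩
        obtain ⟨z', h1, h2, h3⟩ := hs1 r hr
        rw [seq_inj hz h3]
        exact ⟨h1, h2⟩
  · apply Sg.ex
    apply Sg.ex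
    apply Sg.ofDz
    have hX' : ∀ (k : ℕ) (f : (Fin k → M) → M), IsT f → Dz (fun v => X (f v)) :=
      fun k f hf => hX.rel1 hf
    apply_rules (maxDepth := 1000) [Dz.seq, hX', Dz.and, Dz.ball, Dz.bex, Dz.ballle, Dz.imp, Dz.eq, Dz.lt, Dz.le, IsT.const, IsT.var, IsT.add, IsT.mul]
  · refine ⟨0, 0, by simp, fun i hi => absurd hi not_lt_z, fun i hi => absurd hi not_lt_z, fun _ i hi => absurd hi not_lt_z⟩
  · rintro y ⟨s, l, hl, hs1, hs2, hs3⟩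
    by_cases hc : l < x ∧ X y
    · obtain ⟨s', hs', hs''⟩ := seq_append s l y (fun t ht => by
        obtain ⟨z, -, -, hz⟩ := hs1 t ht
        exact ⟨z, hz⟩)
      refine ⟨s', l + 1, succ_le.2 hc.1, fun r hr => ?_, ?_, ?_⟩
      · rcases (lt_succ.1 hr).lt_or_eq with hr | rfl
        · obtain ⟨z, h1, h2, h3⟩ := hs1 r hr
          exact ⟨z, lt_succ.2 h1.le, h2, (hs' r hr z).2 h3⟩
        · exact ⟨y, lt_succ.2 le_rfl, hc.2, hs''⟩
      · intro j hj i hij u _ v _ hu hv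
        rcases (lt_succ.1 hj).lt_or_eq with hj | rfl
        · rw [hs' j hj] at hv
          rw [hs' i (hij.trans hj)] at hu
          exact hs2 j hj i hij u (seq_le hu) v (seq_le hv) hu hv
        · rw [hs' i hij] at hu
          rw [seq_inj hv hs'']
          obtain ⟨z, h1, h2, h3⟩ := hs1 i hij
          rwa [seq_inj hu h3]
      · intro hlx z hz hXz
        rcases (lt_succ.1 hz).lt_or_eq with hz | rfl
        · obtain ⟨r, hr, hr'⟩ := hs3 hc.1 z hz hXz
          exact ⟨r, lt_succ.2 hr.le, (hs' r hr z).2 hr'⟩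
        · exact ⟨l, lt_succ.2 le_rfl, hs''⟩
    · refine ⟨s, l, hl, fun r hr => ?_, hs2, ?_⟩
      · obtain ⟨z, h1, h2⟩ := hs1 r hr
        exact ⟨z, lt_succ.2 h1.le, h2⟩
      · intro hlx z hz hXz
        rcases (lt_succ.1 hz).lt_or_eq with hz | rfl
        · exact hs3 hlx z hz hXz
        · exact absurd ⟨hlx, hXz⟩ hc

theorem div_uniq {K q x q' x' : M} (h1 : x < K) (h2 : x' < K) (e : q * K + x = q' * K + x') :
    q = q' ∧ x = x' := by
  have key : ∀ q x q' x' : M, q * K + x = q' * K + x' → x < K → ¬ q < q' := by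
    intro q x q' x' h1 hx hlt
    obtain ⟨d, rfl⟩ := lt_exists.1 hlt
    have : q * K + x < (q + d + 1) * K + x' := by
      have e : (q + d + 1) * K + x' = q * K + K + (d * K + x') := by ring
      rw [e]
      refine lt_of_lt_of_le (by gcongr) (le_add_of_nonneg_right (by simp))
    exact this.ne h1
  have : q = q' := le_antisymm (not_lt.1 (key _ _ _ _ e.symm h2)) (not_lt.1 (key _ _ _ _ e h1))
  subst this
  exact ⟨rfl, add_left_cancel e⟩

theorem prod_lt {K L i j : M} (hi : i < L) (hj : j < K) : i * K + j < L * K := by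
  obtain ⟨d, rfl⟩ := lt_exists.1 hi
  have e : (i + d + 1) * K = i * K + K + d * K := by ring
  rw [e]
  exact lt_of_lt_of_le (by gcongr) (le_add_of_nonneg_right (by simp))

theorem php0 {K b A : M} (hb : CM b (K * K)) (hA : 0 < A) (hA' : ∀ z, z < K * K → Memb A b z)
    (N : M) (hN : N < K) (a : M) (haA : a ≤ A)
    (ht : ∀ i, i < N + 1 → ∃ j, j < N ∧ Memb a b (i * K + j))
    (hinj : ∀ i, i < N + 1 → ∀ i', i' < N + 1 → ∀ j, j < N → Memb a b (i * K + j) →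
      Memb a b (i' * K + j) → i = i') : False := by
  have := ind0 (P := fun N => ∀ a, a ≤ A → N < K → 
    (∀ i, i < N + 1 → ∃ j, j < N ∧ Memb a b (i * K + j)) → 
    ¬ (∀ i, i < N + 1 → ∀ i', i' < N + 1 → ∀ j, j < N → Memb a b (i * K + j) →
      Memb a b (i' * K + j) → i = i')) ?_ ?_ ?_ N
  · exact this a haA hN ht hinj
  · apply_rules (maxDepth := 1000) [Dz.memb, Dz.not, Dz.and, Dz.ball, Dz.bex, Dz.ballle, Dz.imp, Dz.eq, Dz.lt, Dz.le, IsT.const, IsT.var, IsT.add, IsT.mul]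
  · intro a _ _ ht
    obtain ⟨j, hj, -⟩ := ht 0 (by simp)
    exact absurd hj not_lt_z
  · intro N ih a haA hNK ht hinj
    have hNl : N < N + 1 := lt_succ.2 le_rfl
    obtain ⟨a', -, ha'A, ha'⟩ := comp0 (X := fun u => ∃ i, i < K ∧ ∃ j, j < K ∧ (u = i * K + j ∧
      (Memb a b (i * K + j) ∨ (Memb a b (i * K + N) ∧ Memb a b ((N + 1) * K + j))))) (by
        apply_rules (maxDepth := 1000) [Dz.memb, Dz.not, Dz.and, Dz.or, Dz.ball, Dz.bex, Dz.ballle, Dz.imp, Dz.eq, Dz.lt, Dz.le, IsT.const, IsT.var, IsT.add, IsT.mul]) hb hA hA'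
    have hm : ∀ i j, i < K → j < K → (Memb a' b (i * K + j) ↔ (Memb a b (i * K + j) ∨ (Memb a b (i * K + N) ∧ Memb a b ((N + 1) * K + j)))) := by
      intro i j hi hj
      rw [ha' _ (prod_lt hi hj)]
      constructor
      · rintro ⟨i', hi', j', hj', e, hh⟩
        obtain ⟨rfl, rfl⟩ := div_uniq hj hj' e
        exact hh
      · intro hh
        exact ⟨i, hi, j, hj, rfl, hh⟩
    refine ih a' ha'A (hNl.trans hNK) ?_ ?_
    · intro i hi
      obtain ⟨j, hj, hj'⟩ := ht i (lt_succ.2 hi.le)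
      rcases (lt_succ.1 hj).lt_or_eq with hj | rfl
      · exact ⟨j, hj, (hm i j (hi.trans hNK) (hj.trans (hNl.trans hNK))).2 (Or.inl hj')⟩
      · obtain ⟨j', hj1, hj2⟩ := ht (j + 1) (lt_succ.2 le_rfl)
        rcases (lt_succ.1 hj1).lt_or_eq with hj1 | rfl
        · exact ⟨j', hj1, (hm i j' (hi.trans hNK) (hj1.trans (hNl.trans hNK))).2 (Or.inr ⟨hj', hj2⟩)⟩
        · have := hinj i (lt_succ.2 hi.le) (j' + 1) (lt_succ.2 le_rfl) j' hNl hj' hj2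
          exact absurd hi (by rw [this]; exact lt_irrefl _)
    · intro i hi i' hi' j hj h1 h2
      rw [hm _ _ (hi.trans hNK) (hj.trans (hNl.trans hNK))] at h1
      rw [hm _ _ (hi'.trans hNK) (hj.trans (hNl.trans hNK))] at h2
      have hil := lt_succ.2 hi.le
      have hil' := lt_succ.2 hi'.le
      have hjl : j < N + 1 := hj.trans hNl
      have hNN : N + 1 < N + 1 + 1 := lt_succ.2 le_rfl
      rcases h1 with h1 | ⟨h1, h1'⟩ <;> rcases h2 with h2 | ⟨h2, h2'⟩
      · exact hinj i hil i' hil' j hjl h1 h2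
      · exact absurd hi (by rw [hinj i hil _ hNN j hjl h1 h2']; exact lt_irrefl _)
      · exact absurd hi' (by rw [hinj i' hil' _ hNN j hjl h2 h1']; exact lt_irrefl _)
      · exact hinj i hil i' hil' N hNl h1 h2

theorem phpP {n : ℕ} (hI : ISig n M) {R : M → M → Prop}
    (hR : Pg n (fun v : Fin 2 → M => R (v 0) (v 1))) (N : M)
    (ht : ∀ i, i < N + 1 → ∃ j, j < N ∧ R i j)
    (hinj : ∀ i i' j, i < N + 1 → i' < N + 1 → j < N → R i j → R i' j → i = i') : False := by
  obtain ⟨b, hb⟩ := exists_cm ((N + 1) * (N + 1))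
  obtain ⟨A, hA, hA'⟩ := exists_full b ((N + 1) * (N + 1))
  have hbc := ballCl hI n le_rfl
  obtain ⟨a, -, haA, ha⟩ := compP hI (X := fun u => ∃ i, i < N + 1 ∧ ∃ j, j < N + 1 ∧ (u = i * (N + 1) + j ∧ R i j)) (by
    apply hbc.bex (IsT.const _)
    apply hbc.bex (IsT.const _)
    apply Pg.and
    · apply Pg.ofDz
      apply_rules (maxDepth := 1000) [Dz.eq, IsT.const, IsT.var, IsT.add, IsT.mul]
    · exact hR.rel2 (IsT.var _) (IsT.var _)) hb hA hA'
  have hNl : N < N + 1 := lt_succ.2 le_rfl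
  have hm : ∀ i j, i < N + 1 → j < N + 1 → (Memb a b (i * (N + 1) + j) ↔ R i j) := by
    intro i j hi hj
    rw [ha _ (prod_lt hi hj)]
    constructor
    · rintro ⟨i', hi', j', hj', e, hh⟩
      obtain ⟨rfl, rfl⟩ := div_uniq hj hj' e
      exact hh
    · intro hh
      exact ⟨i, hi, j, hj, rfl, hh⟩
  refine php0 hb hA hA' N hNl a haA ?_ ?_
  · intro i hi
    obtain ⟨j, hj, hj'⟩ := ht i hi
    exact ⟨j, hj, (hm i j hi (hj.trans hNl)).2 hj'⟩
  · intro i hi i' hi' j hj h1 h2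
    exact hinj i i' j hi hi' hj ((hm i j hi (hj.trans hNl)).1 h1) ((hm i' j hi' (hj.trans hNl)).1 h2)

end SeqMake
end ArithFC

open FirstOrder Language
set_option linter.all false
namespace ArithFC

section DirD
attribute [local irreducible] Sg Pg Dz IsT
variable {M : Type} [lang.Structure M] [h : Fact (PAm M)] [h1 : Fact (ISig 1 M)]

theorem sg2 {m : ℕ} {R : M → M → Prop} :
    SigmaDef2 m M R ↔ Sg m (fun v : Fin 2 → M => R (v 0) (v 1)) := sg_iff_isSigmaDef.symm

theorem fair_of_frt {n : ℕ} {k : M} (hF : FRT1 M (n + 1) k) : FairFRT1 M (n + 1) k := by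
  intro x
  obtain ⟨y, hy⟩ := hF x
  refine ⟨y, fun C hC => ?_⟩
  obtain ⟨c, H, ⟨s, hs, hs1, hs2, hs3⟩, hH, i, hi⟩ := hy C hC
  refine ⟨fun u v => u < x ∧ SeqAt s u v, ⟨?_, ?_, ?_, ?_⟩, i, ?_⟩
  · refine sg2.2 (Sg.ofDz ?_)
    apply_rules [Dz.seq, Dz.and, Dz.lt, IsT.var, IsT.const]
  · intro u hu
    obtain ⟨v, hv, hv'⟩ := hs1 u hu
    exact ⟨v, hH v hv, hu, hv'⟩
  · rintro u v v' _ ⟨_, h1⟩ ⟨_, h2⟩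
    exact seq_inj h1 h2
  · rintro u u' v hu hu' ⟨_, h1⟩ ⟨_, h2⟩
    rcases lt_trichotomy u u' with hlt | rfl | hlt
    · exact absurd (hs2 u u' v v hlt hu' h1 h2) (lt_irrefl _)
    · rfl
    · exact absurd (hs2 u' u v v hlt hu h2 h1) (lt_irrefl _)
  · rintro u v hu ⟨_, hv⟩
    exact hi v ((hs3 v).2 ⟨u, hu, hv⟩)

theorem gphp_of_fair {n : ℕ} (hF : ∀ k : M, (1 : M) ≤ k → FairFRT1 M (n + 1) k) :
    GPHP M (n + 1) := by
  intro x
  rcases zero_or_succ x with rfl | ⟨x, rfl⟩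
  · refine ⟨1, ?_⟩
    rintro ⟨F, -, h1, -⟩
    obtain ⟨v, hv, -⟩ := h1 0 (by simp)
    exact not_lt_z hv
  · obtain ⟨y, hy⟩ := hF (x + 1) (by simp) (1 + 1)
    refine ⟨y, ?_⟩
    rintro ⟨F, hF1, hF2, hF3, hF4⟩
    obtain ⟨H, ⟨-, hH1, hH2, hH3⟩, i, hi⟩ := hy F ⟨hF1, hF2, hF3⟩
    have l0 : (0 : M) < 1 + 1 := by simp
    have l1 : (1 : M) < 1 + 1 := lt_succ.2 le_rfl
    obtain ⟨v, hv, hv'⟩ := hH1 0 l0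
    obtain ⟨w, hw, hw'⟩ := hH1 1 l1
    have e := hF4 v w i hv hw (hi _ _ l0 hv') (hi _ _ l1 hw')
    subst e
    exact zero_ne_one (hH3 _ _ _ l0 l1 hv' hw')

theorem core_D {n : ℕ} (hI : ISig n M) {k a x y : M}
    (hy : ¬ ExSigmaInj M (n + 1) y (k * a * x)) {C : M → M → Prop}
    (hC : ∀ z, z < y → ∃ i, i < k ∧ C z i) {θ : M → M → M → Prop}
    (hθ : Pg n (fun v : Fin 3 → M => θ (v 0) (v 1) (v 2)))
    (hCθ : ∀ z i, C z i ↔ ∃ w, θ z i w) {f : M → M → Prop}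
    (hf : Sg (n + 1) (fun v : Fin 2 → M => f (v 0) (v 1)))
    (hf1 : ∀ j v v', f j v → f j v' → v = v')
    (hf2 : ∀ z i, z < y → i < k → C z i → ∃ j v, j < a ∧ f j v ∧ ∃ w, w < v ∧ θ z i w) :
    ∃ (c : M) (H : Set M), CodesFinset c H x ∧ (∀ z ∈ H, z < y) ∧ ∃ i, ∀ z ∈ H, C z i := by
  by_contra hno
  have hb := ballCl hI n le_rfl
  have hT0 : ∀ i v, ∃ s, ∀ z, z < y → (∃ w, w < v ∧ θ z i w) → ∃ r, r < x ∧ SeqAt s r z := by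
    intro i v
    obtain ⟨b, hbm⟩ := exists_cm y
    obtain ⟨A, hA, hA'⟩ := exists_full b y
    obtain ⟨e, -, -, he⟩ := compP hI (X := fun z => ∃ w, w < v ∧ θ z i w) (by
      apply hb.bex (IsT.const _)
      exact hθ.rel3 (IsT.var _) (IsT.const _) (IsT.var _)) hbm hA hA'
    rcases enum_lem (X := fun z => Memb e b z) (Dz.memb (IsT.const _) (IsT.const _) (IsT.var _)) x y with
      ⟨c, H, hc, hH⟩ | ⟨s, hs⟩
    · refine absurd ⟨c, H, hc, fun z hz => (hH z hz).1, i, fun z hz => ?_⟩ hno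
      obtain ⟨w, -, hw⟩ := (he z (hH z hz).1).1 (hH z hz).2
      exact (hCθ z i).2 ⟨w, hw⟩
    · exact ⟨s, fun z hz hh => hs z hz ((he z hz).2 hh)⟩
  obtain ⟨T', hT', hTT, hTu, hTe⟩ := uniformize hI (R := fun q s => ∃ i, i < k ∧ ∃ j, j < a ∧
    (q = i * a + j ∧ ∃ v, f j v ∧ ∀ z, z < y → (∃ w, w < v ∧ θ z i w) → ∃ r, r < x ∧ SeqAt s r z)) (by
      apply Sg.bex (IsT.const _)
      apply Sg.bex (IsT.const _)
      apply Sg.and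
      · apply Sg.ofDz
        apply_rules [Dz.eq, IsT.var, IsT.add, IsT.mul, IsT.const]
      apply Sg.ex
      apply Sg.and
      · exact hf.rel2 (IsT.var _) (IsT.var _)
      apply Sg.mono1
      apply hb _ _ _ (IsT.const _)
      apply Sg.imp
      · apply hb.bex (IsT.var _)
        exact hθ.rel3 (IsT.var _) (IsT.var _) (IsT.var _)
      · apply Sg.ofDz
        apply_rules [Dz.seq, Dz.bex, IsT.var, IsT.const])
  obtain ⟨F', hF', hFF, hFu, hFe⟩ := uniformize hI (R := fun z p => ∃ q, q < k * a ∧ ∃ r, r < x ∧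
    (p = q * x + r ∧ ∃ s, T' q s ∧ SeqAt s r z)) (by
      apply Sg.bex (IsT.const _)
      apply Sg.bex (IsT.const _)
      apply Sg.and
      · apply Sg.ofDz
        apply_rules [Dz.eq, IsT.var, IsT.add, IsT.mul, IsT.const]
      apply Sg.ex
      apply Sg.and
      · exact hT'.rel2 (IsT.var _) (IsT.var _)
      · apply Sg.ofDz
        apply_rules [Dz.seq, IsT.var, IsT.const])
  refine hy ⟨F', sg2.2 hF', ?_, ?_, ?_⟩
  · intro z hz
    obtain ⟨i, hi, hCi⟩ := hC z hz
    obtain ⟨j, v, hj, hfv, w, hw, hθw⟩ := hf2 z i hz hi hCi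
    obtain ⟨s, hs⟩ := hT0 i v
    obtain ⟨s', hs'⟩ := hTe (i * a + j) s ⟨i, hi, j, hj, rfl, v, hfv, hs⟩
    obtain ⟨i', hi', j', hj', e, v', hfv', hh⟩ := hTT _ _ hs'
    obtain ⟨rfl, rfl⟩ := div_uniq hj hj' e
    have := hf1 _ _ _ hfv hfv'
    subst this
    obtain ⟨r, hr, hr'⟩ := hh z hz ⟨w, hw, hθw⟩
    obtain ⟨p, hp⟩ := hFe z ((i * a + j) * x + r) ⟨i * a + j, prod_lt hi hj, r, hr, rfl, s', hs', hr'⟩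
    refine ⟨p, ?_, hp⟩
    obtain ⟨q, hq, r', hr', rfl, -⟩ := hFF _ _ hp
    exact prod_lt hq hr'
  · intro u v v' _ h1 h2
    exact hFu _ _ _ h1 h2
  · intro u u' p _ _ h1 h2
    obtain ⟨q, hq, r, hr, rfl, s, hs, hsr⟩ := hFF _ _ h1
    obtain ⟨q', hq', r', hr', e, s', hs', hsr'⟩ := hFF _ _ h2
    obtain ⟨rfl, rfl⟩ := div_uniq hr hr' e
    rw [hTu _ _ _ hs hs'] at hsr
    exact seq_inj hsr hsr'

theorem frt_of_gphp {n : ℕ} (hI : ISig n M) (hG : GPHP M (n + 1)) (k : M) : FRT1 M (n + 1) k := by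
  intro x
  by_cases hcase : ∃ (f : M → M → Prop) (a : M), Sg (n + 1) (fun v : Fin 2 → M => f (v 0) (v 1)) ∧
      (∀ j, j < a → ∃ v, f j v) ∧ ¬ ∃ b, ∀ j, j < a → ∃ v, v < b ∧ f j v
  · obtain ⟨f, a, hf, hf1, hf2⟩ := hcase
    obtain ⟨f', hf', hff, hfu, hfe⟩ := uniformize hI hf
    obtain ⟨y, hy⟩ := hG (k * a * x)
    refine ⟨y, fun C hC => ?_⟩
    obtain ⟨θ, hθ, hCθ⟩ := (sg2.1 hC.1).contract2 hI
    refine core_D hI hy hC.2.1 hθ hCθ hf' hfu ?_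
    intro z i hz hi hCi
    obtain ⟨w, hw⟩ := (hCθ z i).1 hCi
    by_contra hc
    refine hf2 ⟨w + 1, fun j hj => ?_⟩
    obtain ⟨v, hv⟩ := hf1 j hj
    obtain ⟨v, hv⟩ := hfe j v hv
    refine ⟨v, ?_, hff _ _ hv⟩
    by_contra hvw
    exact hc ⟨j, v, hj, hv, w, succ_le.1 (not_lt.1 hvw), hw⟩
  · obtain ⟨y, hy⟩ := hG (k * 1 * x)
    refine ⟨y, fun C hC => ?_⟩
    obtain ⟨θ, hθ, hCθ⟩ := (sg2.1 hC.1).contract2 hI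
    have : ∃ b, ∀ z, z < y → ∃ w, w < b ∧ ∃ i, i < k ∧ θ z i w := by
      by_contra hc
      refine hcase ⟨fun z w => ∃ i, i < k ∧ θ z i w, y, ?_, ?_, hc⟩
      · apply Sg.bex (IsT.const _)
        exact Sg.ofPg (hθ.rel3 (IsT.var _) (IsT.var _) (IsT.var _))
      · intro z hz
        obtain ⟨i, hi, hCi⟩ := hC.2.1 z hz
        obtain ⟨w, hw⟩ := (hCθ z i).1 hCi
        exact ⟨w, i, hi, hw⟩
    obtain ⟨b, hbz⟩ := this
    refine core_D hI hy hC.2.1 hθ hCθ (f := fun j v => v = b) ?_ ?_ ?_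
    · exact Sg.ofDz (Dz.eq (IsT.var _) (IsT.const _))
    · rintro j v v' rfl rfl; rfl
    · intro z i hz hi hCi
      obtain ⟨w, hw, i', hi', hθw⟩ := hbz z hz
      have : i' = i := hC.2.2 z i' i hz ((hCθ z i').2 ⟨w, hθw⟩) hCi
      subst this
      exact ⟨0, b, by simp, rfl, w, hw, hθw⟩

end DirD
end ArithFC

open FirstOrder Language
set_option linter.all false
namespace ArithFC

section DirE
attribute [local irreducible] Sg Pg Dz IsT
variable {M : Type} [lang.Structure M] [h : Fact (PAm M)]

/-- `t` is the first event about the code `a`. -/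
def NewE (K ea eb t a : M) : Prop :=
  a < K ∧ (∃ w, w ≤ t ∧ t = w * K + a) ∧ Memb ea eb t ∧
    ∀ t', t' < t → Memb ea eb t' → ∀ w, w ≤ t' → ¬ (t' = w * K + a)

/-- `z` is a candidate at step `u`. -/
def Cand (b K ea eb u z : M) : Prop :=
  ∃ t, t ≤ u ∧ ∃ i, i < 1 + 1 ∧ (u = t * (1 + 1) + i ∧ ∃ a, a < K ∧ (NewE K ea eb t a ∧ Memb a b z))

def FreshE (s u z : M) : Prop := ∀ u', u' < u → ¬ SeqAt s u' (z + 1)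

def LocE (y b K ea eb s u p : M) : Prop :=
  (∃ z, z < y ∧ (p = z + 1 ∧ (Cand b K ea eb u z ∧ FreshE s u z) ∧
      ∀ z', z' < z → ¬ (Cand b K ea eb u z' ∧ FreshE s u z'))) ∨
    (p = 0 ∧ ∀ z, z < y → ¬ (Cand b K ea eb u z ∧ FreshE s u z))

def GoodE (y b K ea eb s U : M) : Prop :=
  ∀ u, u < U → ∃ p, p ≤ y ∧ (SeqAt s u p ∧ LocE y b K ea eb s u p)

variable [h1 : Fact (ISig 1 M)]

theorem Dz.newE {k : ℕ} (K : M) {f g e d : (Fin k → M) → M} (hf : IsT f) (hg : IsT g) (he : IsT e)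
    (hd : IsT d) : Dz (fun v => NewE K (f v) (g v) (e v) (d v)) := by
  refine Dz.rel4 (R := fun a b i x => NewE K a b i x) ?_ hf hg he hd
  unfold NewE
  apply_rules (maxDepth := 1000) [Dz.memb, Dz.not, Dz.and, Dz.ball, Dz.bex, Dz.ballle, Dz.bexle, Dz.imp, Dz.eq, Dz.lt, Dz.le, IsT.const, IsT.var, IsT.add, IsT.mul]

theorem Dz.cand {k : ℕ} (b K : M) {f g e d : (Fin k → M) → M} (hf : IsT f) (hg : IsT g) (he : IsT e)
    (hd : IsT d) : Dz (fun v => Cand b K (f v) (g v) (e v) (d v)) := by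
  refine Dz.rel4 (R := fun a c i x => Cand b K a c i x) ?_ hf hg he hd
  unfold Cand
  apply_rules (maxDepth := 1000) [Dz.newE, Dz.memb, Dz.not, Dz.and, Dz.ball, Dz.bex, Dz.ballle, Dz.bexle, Dz.imp, Dz.eq, Dz.lt, Dz.le, IsT.const, IsT.var, IsT.add, IsT.mul]

theorem Dz.freshE {k : ℕ} {f g e : (Fin k → M) → M} (hf : IsT f) (hg : IsT g) (he : IsT e) :
    Dz (fun v => FreshE (f v) (g v) (e v)) := by
  refine Dz.rel3 (R := fun a c i => FreshE a c i) ?_ hf hg he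
  unfold FreshE
  apply_rules (maxDepth := 1000) [Dz.seq, Dz.not, Dz.and, Dz.ball, Dz.bex, Dz.ballle, Dz.bexle, Dz.imp, Dz.eq, Dz.lt, Dz.le, IsT.const, IsT.var, IsT.add, IsT.mul]

theorem Dz.goodE {k : ℕ} (y b K : M) {f g e d : (Fin k → M) → M} (hf : IsT f) (hg : IsT g)
    (he : IsT e) (hd : IsT d) : Dz (fun v => GoodE y b K (f v) (g v) (e v) (d v)) := by
  refine Dz.rel4 (R := fun a c i x => GoodE y b K a c i x) ?_ hf hg he hd
  unfold GoodE LocE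
  apply_rules (maxDepth := 1000) [Dz.seq, Dz.cand, Dz.freshE, Dz.not, Dz.and, Dz.or, Dz.ball, Dz.bex, Dz.ballle, Dz.bexle, Dz.imp, Dz.eq, Dz.lt, Dz.le, IsT.const, IsT.var, IsT.add, IsT.mul]

theorem locE_congr {y b K ea eb ea' eb' s s' u p : M}
    (hC : ∀ z, Cand b K ea eb u z ↔ Cand b K ea' eb' u z)
    (hs : ∀ u', u' < u → ∀ p, SeqAt s u' p ↔ SeqAt s' u' p) :
    LocE y b K ea eb s u p ↔ LocE y b K ea' eb' s' u p := by
  have hF : ∀ z, FreshE s u z ↔ FreshE s' u z := by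
    intro z
    unfold FreshE
    exact forall_congr' fun u' => forall_congr' fun hu => not_congr (hs u' hu _)
  unfold LocE
  simp only [hC, hF]

theorem locE_uniq {y b K ea eb s u p p' : M} (h1 : LocE y b K ea eb s u p)
    (h2 : LocE y b K ea eb s u p') : p = p' := by
  rcases h1 with ⟨z, hz, rfl, hc, hl⟩ | ⟨rfl, hl⟩ <;> rcases h2 with ⟨z', hz', rfl, hc', hl'⟩ | ⟨rfl, hl'⟩
  · rcases lt_trichotomy z z' with hlt | rfl | hlt
    · exact absurd hc (hl' z hlt)
    · rfl
    · exact absurd hc' (hl z' hlt)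
  · exact absurd hc (hl' z hz)
  · exact absurd hc' (hl z' hz')
  · rfl

theorem locE_ex (y b K ea eb s u : M) : ∃ p, p ≤ y ∧ LocE y b K ea eb s u p := by
  by_cases hc : ∃ z, z < y ∧ (Cand b K ea eb u z ∧ FreshE s u z)
  · obtain ⟨z, hz⟩ := hc
    obtain ⟨z, ⟨hzy, hz⟩, -, hl⟩ := lnp0 (P := fun z => z < y ∧ (Cand b K ea eb u z ∧ FreshE s u z)) (by
      apply_rules [Dz.cand, Dz.freshE, Dz.and, Dz.lt, IsT.const, IsT.var]) hz
    exact ⟨z + 1, succ_le.2 hzy, Or.inl ⟨z, hzy, rfl, hz, fun z' hz' hh => hl z' hz' ⟨hz'.trans hzy, hh⟩⟩⟩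
  · refine ⟨0, by simp, Or.inr ⟨rfl, fun z hz hh => hc ⟨z, hz, hh⟩⟩⟩

theorem goodE_ex (y b K ea eb U : M) : ∃ s, GoodE y b K ea eb s U := by
  refine h1.out.ind (P := fun U => ∃ s, GoodE y b K ea eb s U) ?_ ?_ ?_ U
  · apply Sg.ex
    exact Sg.ofDz (Dz.goodE y b K (IsT.const _) (IsT.const _) (IsT.var _) (IsT.var _))
  · exact ⟨0, fun i hi => absurd hi not_lt_z⟩
  · rintro U ⟨s, hs⟩
    obtain ⟨p, hp, hL⟩ := locE_ex y b K ea eb s U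
    obtain ⟨s', hs', hs''⟩ := seq_append s U p (fun t ht => by
      obtain ⟨p, -, hp, -⟩ := hs t ht
      exact ⟨p, hp⟩)
    refine ⟨s', fun u hu => ?_⟩
    rcases (lt_succ.1 hu).lt_or_eq with hu | rfl
    · obtain ⟨p, hp, hp1, hp2⟩ := hs u hu
      refine ⟨p, hp, (hs' u hu p).2 hp1, ?_⟩
      exact (locE_congr (fun _ => Iff.rfl) (fun u' hu' p => hs' u' (hu'.trans hu) p)).2 hp2
    · refine ⟨p, hp, hs'', ?_⟩
      exact (locE_congr (fun _ => Iff.rfl) (fun u' hu' p => hs' u' hu' p)).2 hL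

theorem goodE_uniq {y b K ea eb ea' eb' s s' U : M} (h1 : GoodE y b K ea eb s U)
    (h2 : GoodE y b K ea' eb' s' U)
    (hC : ∀ u, u < U → ∀ z, Cand b K ea eb u z ↔ Cand b K ea' eb' u z) :
    ∀ u, u < U → ∀ p, SeqAt s u p ↔ SeqAt s' u p := by
  have key : ∀ V, ∀ u, u < V → u < U → ∃ p, p ≤ y ∧ (SeqAt s u p ∧ SeqAt s' u p) := by
    refine ind0 (P := fun V => ∀ u, u < V → u < U → ∃ p, p ≤ y ∧ (SeqAt s u p ∧ SeqAt s' u p)) ?_ ?_ ?_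
    · apply_rules [Dz.seq, Dz.and, Dz.ball, Dz.bexle, Dz.imp, Dz.lt, IsT.const, IsT.var]
    · exact fun i hi => absurd hi not_lt_z
    · intro V ih u hu huU
      rcases (lt_succ.1 hu).lt_or_eq with hu | rfl
      · exact ih u hu huU
      · obtain ⟨p, hp, hp1, hp2⟩ := h1 u huU
        obtain ⟨p', hp', hp1', hp2'⟩ := h2 u huU
        have := locE_uniq ((locE_congr (hC u huU) (fun u' hu' q => by
          obtain ⟨r, -, hr, hr'⟩ := ih u' hu' (hu'.trans huU)
          exact ⟨fun hq => by rwa [seq_inj hq hr], fun hq => by rwa [seq_inj hq hr']⟩)).1 hp2) hp2'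
        subst this
        exact ⟨p, hp, hp1, hp1'⟩
  intro u hu q
  obtain ⟨r, -, hr, hr'⟩ := key (u + 1) u (lt_succ.2 le_rfl) hu
  exact ⟨fun hq => by rwa [seq_inj hq hr], fun hq => by rwa [seq_inj hq hr']⟩

/-- No element is chosen twice. -/
theorem goodE_inj {y b K ea eb s U u u' z : M} (hG : GoodE y b K ea eb s U) (hu : u < U)
    (hu' : u' < U) (h1 : SeqAt s u (z + 1)) (h2 : SeqAt s u' (z + 1)) : u = u' := by
  have key : ∀ u u', u < u' → u' < U → SeqAt s u (z + 1) → SeqAt s u' (z + 1) → False := by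
    intro u u' hlt hu' h1 h2
    obtain ⟨p, -, hp, hL⟩ := hG u' hu'
    have e := seq_inj hp h2
    subst e
    rcases hL with ⟨z', hz', e, ⟨-, hF⟩, -⟩ | ⟨e, -⟩
    · have := add_right_cancel e
      subst this
      exact hF u hlt h1
    · exact absurd e (by simp)
  rcases lt_trichotomy u u' with hlt | rfl | hlt
  · exact (key _ _ hlt hu' h1 h2).elim
  · rfl
  · exact (key _ _ hlt hu h2 h1).elim

theorem goodE_cand {y b K ea eb s U u z : M} (hG : GoodE y b K ea eb s U) (hu : u < U)
    (h1 : SeqAt s u (z + 1)) : Cand b K ea eb u z := by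
  obtain ⟨p, -, hp, hL⟩ := hG u hu
  have e := seq_inj hp h1
  subst e
  rcases hL with ⟨z', hz', e, ⟨hc, -⟩, -⟩ | ⟨e, -⟩
  · have := add_right_cancel e
    subst this
    exact hc
  · exact absurd e (by simp)

theorem newE_congr {K ea eb ea' eb' T t a : M} (hT : ∀ t, t < T → (Memb ea eb t ↔ Memb ea' eb' t))
    (ht : t < T) : NewE K ea eb t a ↔ NewE K ea' eb' t a := by
  unfold NewE
  rw [hT t ht]
  refine and_congr_right fun _ => and_congr_right fun _ => and_congr_right fun _ => ?_
  refine forall_congr' fun t' => forall_congr' fun ht' => ?_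
  rw [hT t' (ht'.trans ht)]

theorem half_lt {t i T : M} (hi : t * (1 + 1) + i < T * (1 + 1)) : t < T := by
  by_contra hc
  have : T * (1 + 1) ≤ t * (1 + 1) := by gcongr; exact not_lt.1 hc
  exact absurd hi (not_lt.2 (this.trans (by simp)))

theorem cand_congr {b K ea eb ea' eb' T u z : M} (hT : ∀ t, t < T → (Memb ea eb t ↔ Memb ea' eb' t))
    (hu : u < T * (1 + 1)) : Cand b K ea eb u z ↔ Cand b K ea' eb' u z := by
  unfold Cand
  constructor
  · rintro ⟨t, ht, i, hi, rfl, a, ha, hN, hm⟩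
    exact ⟨t, ht, i, hi, rfl, a, ha, (newE_congr hT (half_lt hu)).1 hN, hm⟩
  · rintro ⟨t, ht, i, hi, rfl, a, ha, hN, hm⟩
    exact ⟨t, ht, i, hi, rfl, a, ha, (newE_congr hT (half_lt hu)).2 hN, hm⟩

theorem newE_inj {K ea eb t t' a : M} (h1 : NewE K ea eb t a) (h2 : NewE K ea eb t' a) : t = t' := by
  obtain ⟨-, ⟨w, hw, e⟩, hm, hl⟩ := h1
  obtain ⟨-, ⟨w', hw', e'⟩, hm', hl'⟩ := h2
  rcases lt_trichotomy t t' with hlt | rfl | hlt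
  · exact absurd e (hl' t hlt hm w hw)
  · rfl
  · exact absurd e' (hl t' hlt hm' w' hw')

theorem newE_fun {K ea eb t a a' : M} (h1 : NewE K ea eb t a) (h2 : NewE K ea eb t a') : a = a' := by
  obtain ⟨ha, ⟨w, hw, e⟩, -⟩ := h1
  obtain ⟨ha', ⟨w', hw', e'⟩, -⟩ := h2
  exact (div_uniq ha ha' (e.symm.trans e')).2

theorem cand_iff {b K ea eb t i a z : M} (hN : NewE K ea eb t a) (hi : i < 1 + 1) :
    Cand b K ea eb (t * (1 + 1) + i) z ↔ Memb a b z := by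
  constructor
  · rintro ⟨t', ht', i', hi', e, a', ha', hN', hm⟩
    obtain ⟨rfl, rfl⟩ := div_uniq hi hi' e
    rwa [newE_fun hN hN']
  · intro hm
    refine ⟨t, ?_, i, hi, rfl, a, hN.1, hN, hm⟩
    refine le_trans (le_mul_of_one_le_right (by simp) (by simp)) (le_add_of_nonneg_right (by simp))

end DirE
end ArithFC

open FirstOrder Language
set_option linter.all false
namespace ArithFC

section DirE2
attribute [local irreducible] Sg Pg Dz IsT
variable {M : Type} [lang.Structure M] [h : Fact (PAm M)] [h1 : Fact (ISig 1 M)]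

/-- The stage `t` is an event: the computation `θ a e w` converges where `t = w * K + a`. -/
def EvE (θ : M → M → M → Prop) (x K t : M) : Prop :=
  ∃ a, a < K ∧ ∃ w, w < t + 1 ∧ (t = w * K + a ∧ ∃ e, e < x ∧ θ a e w)

def CorrE (P : M → Prop) (ea eb T : M) : Prop :=
  (∀ t, t < T → Memb ea eb t → P t) ∧ (∀ t, t < T → P t → Memb ea eb t)

def ColE (P : M → Prop) (y b K z i : M) : Prop :=
  ∃ T ea eb s, CorrE P ea eb T ∧ (GoodE y b K ea eb s (T * (1 + 1)) ∧
    ∃ u, u < T * (1 + 1) ∧ (SeqAt s u (z + 1) ∧ ∃ t, t ≤ u ∧ (u = t * (1 + 1) + i ∧ i < 1 + 1)))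

theorem evE_pg {n : ℕ} (hI : ISig n M) {θ : M → M → M → Prop}
    (hθ : Pg n (fun v : Fin 3 → M => θ (v 0) (v 1) (v 2))) (x K : M) :
    Pg n (fun v : Fin 1 → M => EvE θ x K (v 0)) := by
  have hb := ballCl hI n le_rfl
  unfold EvE
  apply hb.bex (IsT.const _)
  apply hb.bex (IsT.add (IsT.var _) (IsT.const _))
  apply Pg.and
  · exact Pg.ofDz (Dz.eq (IsT.var _) (IsT.add (IsT.mul (IsT.var _) (IsT.const _)) (IsT.var _)))
  apply hb.bex (IsT.const _)
  exact hθ.rel3 (IsT.var _) (IsT.var _) (IsT.var _)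

theorem colE_sg {n : ℕ} (hI : ISig n M) {P : M → Prop} (hP : Pg n (fun v : Fin 1 → M => P (v 0)))
    (y b K : M) : Sg (n + 1) (fun v : Fin 2 → M => ColE P y b K (v 0) (v 1)) := by
  have hb := ballCl hI n le_rfl
  unfold ColE CorrE
  apply Sg.ex
  apply Sg.ex
  apply Sg.ex
  apply Sg.ex
  apply Sg.and
  · apply Sg.and
    · apply Sg.ofPg
      apply Pg.ball (IsT.var _)
      apply Pg.imp
      · exact Sg.ofDz (Dz.memb (IsT.var _) (IsT.var _) (IsT.var _))
      · exact hP.rel1 (IsT.var _)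
    · apply Sg.mono1
      apply hb _ _ _ (IsT.var _)
      apply Sg.imp
      · exact hP.rel1 (IsT.var _)
      · exact Sg.ofDz (Dz.memb (IsT.var _) (IsT.var _) (IsT.var _))
  · apply Sg.ofDz
    apply_rules (maxDepth := 1000) [Dz.goodE, Dz.seq, Dz.and, Dz.bex, Dz.bexle, Dz.eq, Dz.lt, IsT.const, IsT.var, IsT.add, IsT.mul]

theorem CorrE.iff {P : M → Prop} {ea eb T ea' eb' T' t : M} (h1 : CorrE P ea eb T)
    (h2 : CorrE P ea' eb' T') (ht : t < T) (ht' : t < T') : Memb ea eb t ↔ Memb ea' eb' t :=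
  ⟨fun hm => h2.2 t ht' (h1.1 t ht hm), fun hm => h1.2 t ht (h2.1 t ht' hm)⟩

theorem colE_uniq {P : M → Prop} {y b K z i i' : M} (h1 : ColE P y b K z i)
    (h2 : ColE P y b K z i') : i = i' := by
  obtain ⟨T, ea, eb, s, hc, hg, u, hu, hsu, t, -, rfl, hi⟩ := h1
  obtain ⟨T', ea', eb', s', hc', hg', u', hu', hsu', t', -, rfl, hi'⟩ := h2
  have key : ∀ T T' ea ea' eb eb' s s' u u' : M, T ≤ T' → CorrE P ea eb T → CorrE P ea' eb' T' →
      GoodE y b K ea eb s (T * (1 + 1)) → GoodE y b K ea' eb' s' (T' * (1 + 1)) →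
      u < T * (1 + 1) → u' < T' * (1 + 1) → SeqAt s u (z + 1) → SeqAt s' u' (z + 1) → u = u' := by
    intro T T' ea ea' eb eb' s s' u u' hT hc hc' hg hg' hu hu' h1 h2
    have hTT : T * (1 + 1) ≤ T' * (1 + 1) := by gcongr
    have hm : ∀ t, t < T → (Memb ea eb t ↔ Memb ea' eb' t) := fun t ht =>
      hc.iff hc' ht (ht.trans_le hT)
    have := (goodE_uniq hg (fun u hu => hg' u (hu.trans_le hTT))
      (fun u hu z => cand_congr hm hu) u hu _).1 h1
    exact goodE_inj hg' (hu.trans_le hTT) hu' this h2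
  have e : t * (1 + 1) + i = t' * (1 + 1) + i' := by
    rcases le_total T T' with hle | hle
    · exact key _ _ _ _ _ _ _ _ _ _ hle hc hc' hg hg' hu hu' hsu hsu'
    · exact (key _ _ _ _ _ _ _ _ _ _ hle hc' hc hg' hg hu' hu hsu' hsu).symm
  exact (div_uniq hi hi' e).2

theorem event_ex {n : ℕ} (hI : ISig n M) {θ : M → M → M → Prop}
    (hθ : Pg n (fun v : Fin 3 → M => θ (v 0) (v 1) (v 2))) (y b : M) {x K a e w : M} (ha : a < K)
    (he : e < x) (hw : θ a e w) : ∃ t ea eb s, CorrE (EvE θ x K) ea eb (t + 1) ∧ NewE K ea eb t a ∧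
      GoodE y b K ea eb s ((t + 1) * (1 + 1)) := by
  have hb := ballCl hI n le_rfl
  have hK : (1 : M) ≤ K := by
    have h0 : (0 : M) < K := lt_of_le_of_lt (by simp) ha
    simpa using succ_le.2 h0
  have hwt : ∀ w : M, w < w * K + a + 1 := fun w =>
    lt_succ.2 ((le_mul_of_one_le_right (by simp) hK).trans (le_add_of_nonneg_right (by simp)))
  have hQ : Pg n (fun v : Fin 1 → M => ∃ w, w < v 0 + 1 ∧ (v 0 = w * K + a ∧ ∃ e, e < x ∧ θ a e w)) := by
    apply hb.bex (IsT.add (IsT.var _) (IsT.const _))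
    apply Pg.and
    · exact Pg.ofDz (Dz.eq (IsT.var _) (IsT.add (IsT.mul (IsT.var _) (IsT.const _)) (IsT.const _)))
    apply hb.bex (IsT.const _)
    exact hθ.rel3 (IsT.const _) (IsT.var _) (IsT.var _)
  obtain ⟨t, ⟨w', hw't, et, e', he', hw'⟩, -, hl⟩ := hI.lnpP
    (P := fun t => ∃ w, w < t + 1 ∧ (t = w * K + a ∧ ∃ e, e < x ∧ θ a e w)) (a := w * K + a) hQ
    ⟨w, hwt w, rfl, e, he, hw⟩
  obtain ⟨eb, heb⟩ := exists_cm (t + 1)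
  obtain ⟨A, hA, hA'⟩ := exists_full eb (t + 1)
  obtain ⟨ea, -, -, hea⟩ := compP hI (X := EvE θ x K) (evE_pg hI hθ x K) heb hA hA'
  obtain ⟨s, hs⟩ := goodE_ex y b K ea eb ((t + 1) * (1 + 1))
  refine ⟨t, ea, eb, s, ⟨fun t ht => (hea t ht).1, fun t ht => (hea t ht).2⟩, ?_, hs⟩
  refine ⟨ha, ⟨w', lt_succ.1 hw't, et⟩, (hea t (lt_succ.2 le_rfl)).2 ⟨a, ha, w', hw't, et, e', he', hw'⟩, ?_⟩
  intro t' ht' hm w'' hw'' et'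
  obtain ⟨a3, ha3, w3, hw3, e3, hh⟩ := (hea t' (ht'.trans (lt_succ.2 le_rfl))).1 hm
  obtain ⟨rfl, rfl⟩ := div_uniq ha3 ha (e3.symm.trans et')
  exact hl t' ht' ⟨w3, hw3, e3, hh⟩

theorem core_php {n : ℕ} (hI : ISig n M) {θ : M → M → M → Prop}
    (hθ : Pg n (fun v : Fin 3 → M => θ (v 0) (v 1) (v 2))) {x K y b ea eb s T u sH : M}
    (hinj : ∀ a a' e w w', a < K → a' < K → θ a e w → θ a' e w' → a = a')
    (hc : ∀ t, t < T → Memb ea eb t → EvE θ x K t) (hG : GoodE y b K ea eb s (T * (1 + 1)))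
    (hu : u ≤ T * (1 + 1)) (hs1 : ∀ i, i < (1 + 1) * x + 1 → ∃ z, z < y ∧ SeqAt sH i z)
    (hs2 : ∀ i j z z', i < j → j < (1 + 1) * x + 1 → SeqAt sH i z → SeqAt sH j z' → z < z') :
    ∃ i z, i < (1 + 1) * x + 1 ∧ SeqAt sH i z ∧ z < y ∧ FreshE s u z := by
  by_contra hno
  have hb := ballCl hI n le_rfl
  refine phpP hI (R := fun i j => ∃ z, z < y ∧ (SeqAt sH i z ∧ ∃ u', u' < u ∧ (SeqAt s u' (z + 1) ∧
    ∃ t, t < u' + 1 ∧ ∃ par, par < 1 + 1 ∧ (u' = t * (1 + 1) + par ∧ ∃ a, a < K ∧ (NewE K ea eb t a ∧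
      ∃ w, w < t + 1 ∧ ∃ e, e < x ∧ (θ a e w ∧ j = par * x + e)))))) ?_ ((1 + 1) * x) ?_ ?_
  · apply hb.bex (IsT.const _)
    apply Pg.and
    · exact Pg.ofDz (Dz.seq (IsT.const _) (IsT.var _) (IsT.var _))
    apply hb.bex (IsT.const _)
    apply Pg.and
    · exact Pg.ofDz (Dz.seq (IsT.const _) (IsT.var _) (IsT.add (IsT.var _) (IsT.const _)))
    apply hb.bex (IsT.add (IsT.var _) (IsT.const _))
    apply hb.bex (IsT.const _)
    apply Pg.and
    · apply Pg.ofDz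
      apply_rules [Dz.eq, IsT.var, IsT.add, IsT.mul, IsT.const]
    apply hb.bex (IsT.const _)
    apply Pg.and
    · exact Pg.ofDz (Dz.newE K (IsT.const _) (IsT.const _) (IsT.var _) (IsT.var _))
    apply hb.bex (IsT.add (IsT.var _) (IsT.const _))
    apply hb.bex (IsT.const _)
    apply Pg.and
    · exact hθ.rel3 (IsT.var _) (IsT.var _) (IsT.var _)
    · apply Pg.ofDz
      apply_rules [Dz.eq, IsT.var, IsT.add, IsT.mul, IsT.const]
  · intro i hi
    obtain ⟨z, hz, hsz⟩ := hs1 i hi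
    have hnf : ¬ FreshE s u z := fun hf => hno ⟨i, z, hi, hsz, hz, hf⟩
    unfold FreshE at hnf
    push Not at hnf
    obtain ⟨u', hu', hsu'⟩ := hnf
    obtain ⟨t, ht, par, hpar, e1, a, ha, hN, hm⟩ := goodE_cand hG (hu'.trans_le hu) hsu'
    have htT : t < T := half_lt (e1 ▸ hu'.trans_le hu)
    obtain ⟨a', ha', w, hw, e2, e, he, hθe⟩ := hc t htT hN.2.2.1
    obtain ⟨w0, -, e3⟩ := hN.2.1
    obtain ⟨rfl, rfl⟩ := div_uniq ha' ha (e2.symm.trans e3)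
    exact ⟨par * x + e, prod_lt hpar he, z, hz, hsz, u', hu', hsu', t, lt_succ.2 ht, par, hpar, e1, a', ha,
      hN, w, hw, e, he, hθe, rfl⟩
  · rintro i i' j hi hi' hj ⟨z, hz, hsz, u1, hu1, hsu1, t1, ht1, p1, hp1, e1, a1, ha1, hN1, w1, hw1, c1, hc1, hθ1, ej⟩
      ⟨z', hz', hsz', u2, hu2, hsu2, t2, ht2, p2, hp2, e2, a2, ha2, hN2, w2, hw2, c2, hc2, hθ2, ej'⟩
    obtain ⟨rfl, rfl⟩ := div_uniq hc1 hc2 (ej.symm.trans ej')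
    have ea := hinj _ _ _ _ _ ha1 ha2 hθ1 hθ2
    subst ea
    have et := newE_inj hN1 hN2
    subst et
    have eu := e1.trans e2.symm
    subst eu
    have ez := add_right_cancel (seq_inj hsu1 hsu2)
    subst ez
    rcases lt_trichotomy i i' with hlt | rfl | hlt
    · exact absurd (hs2 _ _ _ _ hlt hi' hsz hsz') (lt_irrefl _)
    · rfl
    · exact absurd (hs2 _ _ _ _ hlt hi hsz' hsz) (lt_irrefl _)

theorem half_le {t i : M} : t ≤ t * (1 + 1) + i :=
  (le_mul_of_one_le_right (by simp) (by simp)).trans (le_add_of_nonneg_right (by simp))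

theorem gphp_of_frt2 {n : ℕ} (hI : ISig n M) (hF : FRT1 M (n + 1) ((1 : M) + 1)) :
    GPHP M (n + 1) := by
  by_contra hno
  unfold GPHP at hno
  push Not at hno
  obtain ⟨x, hx⟩ := hno
  obtain ⟨y, hy⟩ := hF ((1 + 1) * x + 1)
  obtain ⟨b, hb⟩ := exists_cm y
  obtain ⟨A, hA, hA'⟩ := exists_full b y
  obtain ⟨G, hG1, hG2, hG3, hG4⟩ := hx (A + 1)
  obtain ⟨θ, hθ, hGθ⟩ := (sg2.1 hG1).contract2 hI
  have hev : ∀ a, a ≤ A → ∃ t ea eb s, CorrE (EvE θ x (A + 1)) ea eb (t + 1) ∧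
      NewE (A + 1) ea eb t a ∧ GoodE y b (A + 1) ea eb s ((t + 1) * (1 + 1)) := by
    intro a ha
    obtain ⟨e, he, hGe⟩ := hG2 a (lt_succ.2 ha)
    obtain ⟨w, hw⟩ := (hGθ a e).1 hGe
    exact event_ex hI hθ y b (lt_succ.2 ha) he hw
  have hlt : ∀ t i : M, i < 1 + 1 → t * (1 + 1) + i < (t + 1) * (1 + 1) := fun t i hi =>
    prod_lt (lt_succ.2 le_rfl) hi
  obtain ⟨c, H, ⟨sH, -, hs1, hs2, hs3⟩, hH, i0, hi0⟩ := hy (ColE (EvE θ x (A + 1)) y b (A + 1))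
    ⟨sg2.2 (colE_sg hI (evE_pg hI hθ x (A + 1)) y b (A + 1)), by
      intro z hz
      obtain ⟨a, -, haA, ha⟩ := comp0 (X := fun z' => z' = z) (Dz.eq (IsT.var _) (IsT.const _)) hb hA hA'
      obtain ⟨t, ea, eb, s, hc, hN, hg⟩ := hev a haA
      have l0 : (0 : M) < 1 + 1 := by simp
      have hcand : Cand b (A + 1) ea eb (t * (1 + 1) + 0) z := (cand_iff hN l0).2 ((ha z hz).2 rfl)
      by_cases hfr : FreshE s (t * (1 + 1) + 0) z
      · obtain ⟨p, -, hp, hL⟩ := hg _ (hlt t 0 l0)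
        rcases hL with ⟨z', hz', rfl, ⟨hc', -⟩, -⟩ | ⟨-, hn⟩
        · have ez := (ha z' hz').1 ((cand_iff hN l0).1 hc')
          subst ez
          exact ⟨0, l0, t + 1, ea, eb, s, hc, hg, _, hlt t 0 l0, hp, t, half_le, rfl, l0⟩
        · exact absurd ⟨hcand, hfr⟩ (hn z hz)
      · unfold FreshE at hfr
        push Not at hfr
        obtain ⟨u', hu', hsu'⟩ := hfr
        have hu2 := hu'.trans (hlt t 0 l0)
        obtain ⟨t', ht', i, hi, e1, -⟩ := goodE_cand hg hu2 hsu'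
        exact ⟨i, hi, t + 1, ea, eb, s, hc, hg, u', hu2, hsu', t', ht', e1, hi⟩,
      fun z i i' _ h1 h2 => colE_uniq h1 h2⟩
  have hXd : Dz (fun v : Fin 1 → M => ∃ i, i < (1 + 1) * x + 1 ∧ SeqAt sH i (v 0)) := by
    apply_rules [Dz.seq, Dz.bex, IsT.var, IsT.const]
  obtain ⟨a, -, haA, ha⟩ := comp0 (X := fun z => ∃ i, i < (1 + 1) * x + 1 ∧ SeqAt sH i z) hXd hb hA hA'
  obtain ⟨t, ea, eb, s, hc, hN, hg⟩ := hev a haA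
  have main : ∀ i : M, i < 1 + 1 → i0 = i := by
    intro i hi
    obtain ⟨j, z, hj, hjz, hz, hfr⟩ := core_php hI hθ (x := x) (u := t * (1 + 1) + i) (sH := sH)
      (fun a a' e w w' ha ha' h1 h2 => hG4 a a' e ha ha' ((hGθ _ _).2 ⟨w, h1⟩) ((hGθ _ _).2 ⟨w', h2⟩))
      hc.1 hg (hlt t i hi).le (fun i hi => by
        obtain ⟨z, hz, hz'⟩ := hs1 i hi
        exact ⟨z, hH z hz, hz'⟩) hs2
    have hcand : Cand b (A + 1) ea eb (t * (1 + 1) + i) z := (cand_iff hN hi).2 ((ha z hz).2 ⟨j, hj, hjz⟩)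
    obtain ⟨p, -, hp, hL⟩ := hg _ (hlt t i hi)
    rcases hL with ⟨z', hz', rfl, ⟨hc', -⟩, -⟩ | ⟨-, hn⟩
    · have hzH := (hs3 z').2 ((ha z' hz').1 ((cand_iff hN hi).1 hc'))
      exact colE_uniq (hi0 z' hzH) ⟨t + 1, ea, eb, s, hc, hg, _, hlt t i hi, hp, t, half_le, rfl, hi⟩
    · exact absurd ⟨hcand, hfr⟩ (hn z hz)
  exact zero_ne_one ((main 0 (by simp)).symm.trans (main 1 (lt_succ.2 le_rfl)))

end DirE2
end ArithFC


namespace ArithFC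

/-- For `n ≥ 1`, over PA⁻ + IΣn the following are pairwise equivalent:
GPHP(Σ_{n+1}), FRT¹(Σ_{n+1}), fairFRT¹(Σ_{n+1}), FRT¹₂(Σ_{n+1}). -/
theorem statement_7 (n : ℕ) (hn : 1 ≤ n) (M : Type) [lang.Structure M]
    (hPA : PAm M) (hI : ISig n M) :
    (GPHP M (n + 1) ↔ ∀ k : M, (1 : M) ≤ k → FRT1 M (n + 1) k) ∧
      ((∀ k : M, (1 : M) ≤ k → FRT1 M (n + 1) k) ↔
        ∀ k : M, (1 : M) ≤ k → FairFRT1 M (n + 1) k) ∧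
      ((∀ k : M, (1 : M) ≤ k → FairFRT1 M (n + 1) k) ↔
        FRT1 M (n + 1) ((1 : M) + 1)) := by
  haveI : Fact (PAm M) := ⟨hPA⟩
  haveI : Fact (ISig 1 M) := ⟨hI.mono hn⟩
  have two : (1 : M) ≤ 1 + 1 := by simp
  refine ⟨⟨fun hG k _ => frt_of_gphp hI hG k,
    fun hF => gphp_of_fair fun k hk => fair_of_frt (hF k hk)⟩,
    ⟨fun hF k hk => fair_of_frt (hF k hk), fun hF k _ => frt_of_gphp hI (gphp_of_fair hF) k⟩,
    ⟨fun hF => frt_of_gphp hI (gphp_of_fair hF) _,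
      fun hF k _ => fair_of_frt (frt_of_gphp hI (gphp_of_frt2 hI hF) k)⟩⟩

end ArithFC
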